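/- arXiv:0712.1639 — 3 statements merged into one kernel-verified Lean document; each statement's English description precedes it below -/
import Mathlib

section
/- For integers k ≥ 1 and d ≥ 1 and each ω ∈ {•,★}, the multiple zeta value ζ^ω_d({2k}^d) = (-1)^{kd} · 2^{2kd} · [ Σ_{μ ⊢ d} (ε^ω_μ / z_μ) · ((-1)^{ℓ(μ)} / 2^{ℓ(μ)}) · ∏_{j=1}^{ℓ(μ)} B_{2kμ_j}/(2kμ_j)! ] · π^{2kd}, where the sum is over all partitions μ of d. In particular ζ^ω_d({2k}^d) is a rational multiple of π^{2kd}. -/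
open Complex Filter Finset Topology

noncomputable section

/-- `z_μ = ∏_i i^{m_i(μ)} m_i(μ)!` for a partition `μ`. -/
def zPart {d : ℕ} (μ : Nat.Partition d) : ℕ :=
  ∏ i ∈ μ.parts.toFinset, i ^ μ.parts.count i * (μ.parts.count i).factorial

/-- Truncated strict multiple zeta sum `∑_{0<m_1<⋯<m_d≤M} ∏_j m_j^{-κ}`. -/
def mzvSumLt (d κ M : ℕ) : ℂ :=
  ∑ m ∈ (Fintype.piFinset fun _ : Fin d => Finset.Icc 1 M).filter
      (fun m => ∀ i j : Fin d, i < j → m i < m j),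
    ∏ j, 1 / (m j : ℂ) ^ κ

/-- Truncated non-strict multiple zeta sum `∑_{0<m_1≤⋯≤m_d≤M} ∏_j m_j^{-κ}`. -/
def mzvSumLe (d κ M : ℕ) : ℂ :=
  ∑ m ∈ (Fintype.piFinset fun _ : Fin d => Finset.Icc 1 M).filter
      (fun m => ∀ i j : Fin d, i < j → m i ≤ m j),
    ∏ j, 1 / (m j : ℂ) ^ κ

/-- The partition sum appearing in formula (2.7) for `ζ^ω_d({2k}^d)`. -/
def mzvEvalSum (k d : ℕ) (strict : Bool) : ℂ :=
  ∑ μ : Nat.Partition d,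
    ((if strict then (-1 : ℂ) ^ ((d : ℤ) - μ.parts.card) else 1) / (zPart μ : ℂ)) *
    ((-1 : ℂ) ^ μ.parts.card / 2 ^ μ.parts.card) *
    (μ.parts.map fun pj =>
      (bernoulli' (2 * k * pj) : ℂ) / ((2 * k * pj).factorial : ℂ)).prod

/-- `z` of a multiset. -/
def zMul (s : Multiset ℕ) : ℕ :=
  ∏ i ∈ s.toFinset, i ^ s.count i * (s.count i).factorial

lemma zMul_eq (s : Multiset ℕ) (T : Finset ℕ) (h : s.toFinset ⊆ T) :
    zMul s = ∏ i ∈ T, i ^ s.count i * (s.count i).factorial := by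
  unfold zMul
  refine Finset.prod_subset h ?_
  intro i _ hi
  have : s.count i = 0 := by
    rw [Multiset.count_eq_zero]; simpa using hi
  simp [this]

lemma zMul_cons (r : ℕ) (s : Multiset ℕ) :
    zMul (r ::ₘ s) = r * (s.count r + 1) * zMul s := by
  rw [zMul_eq (r ::ₘ s) (insert r s.toFinset) (by simp),
    zMul_eq s (insert r s.toFinset) (by simp),
    ← Finset.mul_prod_erase _ _ (Finset.mem_insert_self r s.toFinset),
    ← Finset.mul_prod_erase _ (fun i => i ^ s.count i * (s.count i).factorial)
      (Finset.mem_insert_self r s.toFinset)]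
  have : ∀ i ∈ (insert r s.toFinset).erase r,
      i ^ (r ::ₘ s).count i * ((r ::ₘ s).count i).factorial
        = i ^ s.count i * (s.count i).factorial := by
    intro i hi
    rw [Multiset.count_cons_of_ne (Finset.ne_of_mem_erase hi)]
  rw [Finset.prod_congr rfl this, Multiset.count_cons_self, Nat.factorial_succ, pow_succ]
  ring

lemma zMul_pos (s : Multiset ℕ) (h : ∀ i ∈ s, 0 < i) : 0 < zMul s := by
  unfold zMul
  refine Finset.prod_pos fun i hi => ?_
  have := h i (by simpa using hi)
  positivity

/-- The weight of a multiset. -/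
def wt (a : ℕ → ℂ) (s : Multiset ℕ) : ℂ := (s.map a).prod / (zMul s : ℂ)

/-- Partitions of `d` as multisets. -/
def partSet (d : ℕ) : Finset (Multiset ℕ) :=
  (Finset.univ : Finset (Nat.Partition d)).image Nat.Partition.parts

lemma mem_partSet {d : ℕ} {s : Multiset ℕ} :
    s ∈ partSet d ↔ (∀ i ∈ s, 0 < i) ∧ s.sum = d := by
  unfold partSet
  simp only [Finset.mem_image, Finset.mem_univ, true_and]
  constructor
  · rintro ⟨μ, rfl⟩
    exact ⟨fun i hi => μ.parts_pos hi, μ.parts_sum⟩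
  · rintro ⟨h1, h2⟩
    exact ⟨⟨s, fun {i} hi => h1 i hi, h2⟩, rfl⟩

/-- Partition sum. -/
def pSum (a : ℕ → ℂ) (d : ℕ) : ℂ := ∑ s ∈ partSet d, wt a s

lemma pSum_eq (a : ℕ → ℂ) (d : ℕ) :
    pSum a d = ∑ μ : Nat.Partition d, (μ.parts.map a).prod / (zPart μ : ℂ) := by
  unfold pSum partSet
  rw [Finset.sum_image]
  · rfl
  · intro x _ y _ h
    exact Nat.Partition.ext h

lemma pSum_zero (a : ℕ → ℂ) : pSum a 0 = 1 := by
  have : partSet 0 = {0} := by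
    ext s
    rw [mem_partSet, Finset.mem_singleton]
    constructor
    · rintro ⟨h1, h2⟩
      rw [Multiset.sum_eq_zero_iff] at h2
      rw [Multiset.eq_zero_iff_forall_notMem]
      intro i hi
      have := h1 i hi
      have := h2 i hi
      omega
    · rintro rfl; simp
  simp [pSum, this, wt, zMul]

lemma pSum_newton (a : ℕ → ℂ) (ha : a 0 = 0) (d : ℕ) :
    (d : ℂ) * pSum a d = ∑ x ∈ Finset.HasAntidiagonal.antidiagonal d, a x.1 * pSum a x.2 := by
  have h1 : (d : ℂ) * pSum a d = ∑ s ∈ partSet d, ∑ r ∈ s.toFinset,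
      ((s.count r * r : ℕ) : ℂ) * wt a s := by
    rw [pSum, Finset.mul_sum]
    refine Finset.sum_congr rfl fun s hs => ?_
    rw [← Finset.sum_mul]
    congr 1
    have := (mem_partSet.1 hs).2
    rw [Finset.sum_multiset_count] at this
    rw [← this]
    push_cast
    simp
  have h2 : ∑ x ∈ Finset.HasAntidiagonal.antidiagonal d, a x.1 * pSum a x.2
      = ∑ x ∈ (Finset.HasAntidiagonal.antidiagonal d).filter (fun x => x.1 ≠ 0), ∑ s ∈ partSet x.2,
        a x.1 * wt a s := by
    rw [Finset.sum_filter]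
    refine Finset.sum_congr rfl fun x _ => ?_
    split_ifs with h
    · rw [pSum, Finset.mul_sum]
    · simp only [ne_eq, not_not] at h
      rw [h, ha, zero_mul]
  rw [h1, h2, Finset.sum_sigma', Finset.sum_sigma']
  refine Finset.sum_bij' (fun p _ => ⟨(p.2, d - p.2), p.1.erase p.2⟩)
    (fun p _ => ⟨p.1.1 ::ₘ p.2, p.1.1⟩) ?_ ?_ ?_ ?_ ?_
  · rintro ⟨s, r⟩ h
    simp only [Finset.mem_sigma, Multiset.mem_toFinset, mem_partSet, Finset.mem_filter,
      Finset.HasAntidiagonal.mem_antidiagonal] at h ⊢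
    obtain ⟨⟨h1, h2⟩, h3⟩ := h
    have h4 := Multiset.sum_erase h3
    have h5 := h1 r h3
    refine ⟨⟨by omega, by omega⟩, fun i hi => h1 i (Multiset.mem_of_mem_erase hi), by omega⟩
  · rintro ⟨⟨r, b⟩, s⟩ h
    simp only [Finset.mem_sigma, Multiset.mem_toFinset, mem_partSet, Finset.mem_filter,
      Finset.HasAntidiagonal.mem_antidiagonal] at h ⊢
    obtain ⟨⟨h1, h2⟩, h3, h4⟩ := h
    refine ⟨⟨?_, by simp; omega⟩, by simp⟩
    intro i hi
    rcases Multiset.mem_cons.1 hi with rfl | hi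
    · omega
    · exact h3 i hi
  · rintro ⟨s, r⟩ h
    simp only [Finset.mem_sigma, Multiset.mem_toFinset] at h
    simp [Multiset.cons_erase h.2]
  · rintro ⟨⟨r, b⟩, s⟩ h
    simp only [Finset.mem_sigma, Multiset.mem_toFinset, mem_partSet, Finset.mem_filter,
      Finset.HasAntidiagonal.mem_antidiagonal] at h
    have : d - r = b := by omega
    simp [this]
  · rintro ⟨s, r⟩ h
    simp only [Finset.mem_sigma, Multiset.mem_toFinset, mem_partSet] at h
    obtain ⟨⟨h1, h2⟩, h3⟩ := h
    obtain ⟨t, rfl⟩ := Multiset.exists_cons_of_mem h3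
    have h5 := h1 r h3
    have h6 : (zMul t : ℂ) ≠ 0 := by
      have := zMul_pos t fun i hi => h1 i (Multiset.mem_cons_of_mem hi)
      exact_mod_cast this.ne'
    have h7 : (r : ℂ) ≠ 0 := by exact_mod_cast h5.ne'
    have h8 : ((t.count r : ℂ) + 1) ≠ 0 := by exact_mod_cast Nat.succ_ne_zero (t.count r)
    simp only [wt, zMul_cons, Multiset.count_cons_self, Multiset.map_cons, Multiset.prod_cons,
      Multiset.erase_cons_head]
    push_cast
    field_simp

/-- Newton's recursion determines the partition sums. -/
lemma eq_pSum (a : ℕ → ℂ) (ha : a 0 = 0) (f : ℕ → ℂ) (h0 : f 0 = 1)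
    (hf : ∀ d : ℕ, (d : ℂ) * f d = ∑ x ∈ Finset.HasAntidiagonal.antidiagonal d, a x.1 * f x.2) (d : ℕ) :
    f d = pSum a d := by
  induction d using Nat.strong_induction_on with
  | _ d ih =>
    rcases Nat.eq_zero_or_pos d with rfl | hd
    · rw [h0, pSum_zero]
    · have : (d : ℂ) ≠ 0 := by exact_mod_cast hd.ne'
      apply mul_left_cancel₀ this
      rw [hf, pSum_newton a ha]
      refine Finset.sum_congr rfl fun x hx => ?_
      rw [Finset.HasAntidiagonal.mem_antidiagonal] at hx
      rcases Nat.eq_zero_or_pos x.1 with h | h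
      · rw [h, ha]; simp
      · rw [ih x.2 (by omega)]

lemma sumLt_zero (κ M : ℕ) : mzvSumLt 0 κ M = 1 := by
  simp [mzvSumLt]

lemma sumLe_zero (κ M : ℕ) : mzvSumLe 0 κ M = 1 := by
  simp [mzvSumLe]

lemma sumLt_succ_zero (d κ : ℕ) : mzvSumLt (d+1) κ 0 = 0 := by
  unfold mzvSumLt
  refine Finset.sum_eq_zero fun m hm => ?_
  simp only [Finset.mem_filter, Fintype.mem_piFinset] at hm
  have := hm.1 0
  simp at this

lemma sumLe_succ_zero (d κ : ℕ) : mzvSumLe (d+1) κ 0 = 0 := by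
  unfold mzvSumLe
  refine Finset.sum_eq_zero fun m hm => ?_
  simp only [Finset.mem_filter, Fintype.mem_piFinset] at hm
  have := hm.1 0
  simp at this

lemma sumLt_succ (d κ M : ℕ) : mzvSumLt (d+1) κ (M+1) =
    mzvSumLt (d+1) κ M + 1 / ((M+1 : ℕ) : ℂ)^κ * mzvSumLt d κ M := by
  conv_lhs => unfold mzvSumLt
  rw [← Finset.sum_filter_not_add_sum_filter _ (fun m => m (Fin.last d) = M+1)]
  congr 1
  · unfold mzvSumLt
    refine Finset.sum_congr ?_ fun _ _ => rfl
    ext m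
    simp only [Finset.mem_filter, Fintype.mem_piFinset, Finset.mem_Icc]
    constructor
    · rintro ⟨⟨h1, h2⟩, h3⟩
      refine ⟨fun i => ⟨(h1 i).1, ?_⟩, h2⟩
      have h4 := h1 (Fin.last d)
      rcases (Fin.le_last i).eq_or_lt with rfl | h
      · omega
      · have := h2 _ _ h; omega
    · rintro ⟨h1, h2⟩
      refine ⟨⟨fun i => ⟨(h1 i).1, by have := h1 i; omega⟩, h2⟩, ?_⟩
      have := h1 (Fin.last d); omega
  · unfold mzvSumLt
    rw [Finset.mul_sum]
    refine Finset.sum_bij' (fun m _ => fun i => m (Fin.castSucc i))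
      (fun m _ => Fin.snoc (α := fun _ => ℕ) m (M+1)) ?_ ?_ ?_ ?_ ?_
    · intro m hm
      simp only [Finset.mem_filter, Fintype.mem_piFinset, Finset.mem_Icc] at hm ⊢
      obtain ⟨⟨h1, h2⟩, h3⟩ := hm
      refine ⟨fun i => ⟨(h1 _).1, ?_⟩, fun i j hij => h2 _ _ (by simpa using hij)⟩
      have := h2 _ _ (Fin.castSucc_lt_last i); omega
    · intro m hm
      simp only [Finset.mem_filter, Fintype.mem_piFinset, Finset.mem_Icc] at hm ⊢
      obtain ⟨h1, h2⟩ := hm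
      refine ⟨⟨fun i => ?_, fun i j hij => ?_⟩, by simp⟩
      · refine Fin.lastCases ?_ (fun i => ?_) i
        · simp
        · have := h1 i; simp; omega
      · induction j using Fin.lastCases with
        | last =>
          induction i using Fin.lastCases with
          | last => simp at hij
          | cast i => have := h1 i; simp; omega
        | cast j =>
          induction i using Fin.lastCases with
          | last => exact absurd hij (not_lt.2 (Fin.le_last _))
          | cast i => simpa using h2 i j (by simpa using hij)
    · intro m hm
      simp only [Finset.mem_filter] at hm
      funext i
      induction i using Fin.lastCases with
      | last => simp [hm.2]
      | cast i => simp
    · intro m hm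
      funext i
      simp
    · intro m hm
      simp only [Finset.mem_filter] at hm
      rw [Fin.prod_univ_castSucc, hm.2, mul_comm]

lemma sumLe_succ (d κ M : ℕ) : mzvSumLe (d+1) κ (M+1) =
    mzvSumLe (d+1) κ M + 1 / ((M+1 : ℕ) : ℂ)^κ * mzvSumLe d κ (M+1) := by
  conv_lhs => unfold mzvSumLe
  rw [← Finset.sum_filter_not_add_sum_filter _ (fun m => m (Fin.last d) = M+1)]
  congr 1
  · unfold mzvSumLe
    refine Finset.sum_congr ?_ fun _ _ => rfl
    ext m
    simp only [Finset.mem_filter, Fintype.mem_piFinset, Finset.mem_Icc]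
    constructor
    · rintro ⟨⟨h1, h2⟩, h3⟩
      refine ⟨fun i => ⟨(h1 i).1, ?_⟩, h2⟩
      have h4 := h1 (Fin.last d)
      rcases (Fin.le_last i).eq_or_lt with rfl | h
      · omega
      · have := h2 _ _ h; omega
    · rintro ⟨h1, h2⟩
      refine ⟨⟨fun i => ⟨(h1 i).1, by have := h1 i; omega⟩, h2⟩, ?_⟩
      have := h1 (Fin.last d); omega
  · unfold mzvSumLe
    rw [Finset.mul_sum]
    refine Finset.sum_bij' (fun m _ => fun i => m (Fin.castSucc i))
      (fun m _ => Fin.snoc (α := fun _ => ℕ) m (M+1)) ?_ ?_ ?_ ?_ ?_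
    · intro m hm
      simp only [Finset.mem_filter, Fintype.mem_piFinset, Finset.mem_Icc] at hm ⊢
      obtain ⟨⟨h1, h2⟩, h3⟩ := hm
      exact ⟨fun i => h1 _, fun i j hij => h2 _ _ (by simpa using hij)⟩
    · intro m hm
      simp only [Finset.mem_filter, Fintype.mem_piFinset, Finset.mem_Icc] at hm ⊢
      obtain ⟨h1, h2⟩ := hm
      refine ⟨⟨fun i => ?_, fun i j hij => ?_⟩, by simp⟩
      · refine Fin.lastCases ?_ (fun i => ?_) i
        · simp
        · have := h1 i; simp; omega
      · induction j using Fin.lastCases with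
        | last =>
          induction i using Fin.lastCases with
          | last => simp at hij
          | cast i => have := h1 i; simp; omega
        | cast j =>
          induction i using Fin.lastCases with
          | last => exact absurd hij (not_lt.2 (Fin.le_last _))
          | cast i => simpa using h2 i j (by simpa using hij)
    · intro m hm
      simp only [Finset.mem_filter] at hm
      funext i
      induction i using Fin.lastCases with
      | last => simp [hm.2]
      | cast i => simp
    · intro m hm
      funext i
      simp
    · intro m hm
      simp only [Finset.mem_filter] at hm
      rw [Fin.prod_univ_castSucc, hm.2, mul_comm]

/-- Truncated power sums, with value `0` at `r = 0`. -/
def pw (κ M r : ℕ) : ℂ := if r = 0 then 0 else ∑ i ∈ Finset.range M, (1 / ((i+1 : ℕ) : ℂ)^κ)^r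

/-- Signed truncated power sums. -/
def pws (κ M r : ℕ) : ℂ := -(-1)^r * pw κ M r

open PowerSeries in
lemma pw_ser (κ M : ℕ) :
    (PowerSeries.mk (pw κ (M+1)) - PowerSeries.mk (pw κ M)) *
      (1 - C (1 / ((M+1 : ℕ) : ℂ)^κ) * X) = C (1 / ((M+1 : ℕ) : ℂ)^κ) * X := by
  generalize hx : (1 / ((M+1 : ℕ) : ℂ)^κ) = x
  have h : ∀ r, r ≠ 0 → pw κ (M+1) r - pw κ M r = x ^ r := by
    intro r hr
    simp only [pw, hr, if_false, Finset.sum_range_succ, hx]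
    ring
  have h0 : ∀ M, pw κ M 0 = 0 := fun M => by simp [pw]
  ext n
  rw [mul_sub, mul_one, mul_left_comm, ← mul_assoc, map_sub]
  rcases n with _ | n
  · simp [h0, coeff_zero_eq_constantCoeff]
  · rw [coeff_succ_mul_X, coeff_succ_mul_X, coeff_C_mul, map_sub, map_sub]
    simp only [coeff_mk]
    rw [h _ (Nat.succ_ne_zero n)]
    rcases n with _ | n
    · simp [h0]
    · rw [h _ (Nat.succ_ne_zero n)]
      simp [coeff_C]
      ring

open PowerSeries in
lemma pws_ser (κ M : ℕ) :
    (PowerSeries.mk (pws κ (M+1)) - PowerSeries.mk (pws κ M)) *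
      (1 + C (1 / ((M+1 : ℕ) : ℂ)^κ) * X) = C (1 / ((M+1 : ℕ) : ℂ)^κ) * X := by
  generalize hx : (1 / ((M+1 : ℕ) : ℂ)^κ) = x
  have h : ∀ r, r ≠ 0 → pws κ (M+1) r - pws κ M r = -(-x) ^ r := by
    intro r hr
    simp only [pws, pw, hr, if_false, Finset.sum_range_succ, hx]
    rw [neg_pow x]
    ring
  have h0 : ∀ M, pws κ M 0 = 0 := fun M => by simp [pws, pw]
  ext n
  rw [mul_add, mul_one, mul_left_comm, ← mul_assoc, map_add]
  rcases n with _ | n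
  · simp [h0, coeff_zero_eq_constantCoeff]
  · rw [coeff_succ_mul_X, coeff_succ_mul_X, coeff_C_mul, map_sub, map_sub]
    simp only [coeff_mk]
    rw [h _ (Nat.succ_ne_zero n)]
    rcases n with _ | n
    · simp [h0]
    · rw [h _ (Nat.succ_ne_zero n)]
      simp [coeff_C]
      ring

/-- Generating series. -/
def serLt (κ M : ℕ) : PowerSeries ℂ := PowerSeries.mk fun d => mzvSumLt d κ M
/-- Generating series. -/
def serLe (κ M : ℕ) : PowerSeries ℂ := PowerSeries.mk fun d => mzvSumLe d κ M

open PowerSeries in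
lemma serLt_succ (κ M : ℕ) :
    serLt κ (M+1) = (1 + C (1 / ((M+1 : ℕ) : ℂ)^κ) * X) * serLt κ M := by
  ext n
  rw [add_mul, one_mul, mul_assoc, map_add, coeff_C_mul]
  rcases n with _ | n
  · simp [serLt, sumLt_zero]
  · rw [coeff_succ_X_mul]
    simp only [serLt, coeff_mk]
    exact sumLt_succ n κ M

open PowerSeries in
lemma serLe_succ (κ M : ℕ) :
    (1 - C (1 / ((M+1 : ℕ) : ℂ)^κ) * X) * serLe κ (M+1) = serLe κ M := by
  ext n
  rw [sub_mul, one_mul, mul_assoc, map_sub, coeff_C_mul]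
  rcases n with _ | n
  · simp [serLe, sumLe_zero]
  · rw [coeff_succ_X_mul]
    simp only [serLe, coeff_mk]
    rw [sumLe_succ n κ M]
    ring

lemma serLt_zero (κ : ℕ) : serLt κ 0 = 1 := by
  ext n
  rcases n with _ | n
  · simp [serLt, sumLt_zero]
  · simp [serLt, sumLt_succ_zero, PowerSeries.coeff_one]

lemma serLe_zero (κ : ℕ) : serLe κ 0 = 1 := by
  ext n
  rcases n with _ | n
  · simp [serLe, sumLe_zero]
  · simp [serLe, sumLe_succ_zero, PowerSeries.coeff_one]

open PowerSeries in
lemma serLt_newton (κ M : ℕ) :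
    X * derivative ℂ (serLt κ M) = PowerSeries.mk (pws κ M) * serLt κ M := by
  induction M with
  | zero =>
    have : PowerSeries.mk (pws κ 0) = 0 := by
      ext n; simp [pws, pw]
    rw [this, serLt_zero]; simp
  | succ M ih =>
    have h := pws_ser κ M
    have hC : derivative ℂ (1 + C (1 / ((M+1 : ℕ) : ℂ)^κ) * X : PowerSeries ℂ)
        = C (1 / ((M+1 : ℕ) : ℂ)^κ) := by
      rw [map_add, Derivation.leibniz]
      simp [derivative_C, derivative_X]
    rw [serLt_succ, Derivation.leibniz, hC]
    simp only [smul_eq_mul]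
    generalize C (1 / ((M+1 : ℕ) : ℂ)^κ) = c at *
    linear_combination (1 + c * X) * ih - serLt κ M * h

open PowerSeries in
lemma serLe_newton (κ M : ℕ) :
    X * derivative ℂ (serLe κ M) = PowerSeries.mk (pw κ M) * serLe κ M := by
  induction M with
  | zero =>
    have : PowerSeries.mk (pw κ 0) = 0 := by
      ext n; simp [pw]
    rw [this, serLe_zero]; simp
  | succ M ih =>
    have h := pw_ser κ M
    have hC : derivative ℂ (1 - C (1 / ((M+1 : ℕ) : ℂ)^κ) * X : PowerSeries ℂ)
        = - C (1 / ((M+1 : ℕ) : ℂ)^κ) := by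
      rw [map_sub, Derivation.leibniz]
      simp [derivative_C, derivative_X]
    have hne : (1 - C (1 / ((M+1 : ℕ) : ℂ)^κ) * X : PowerSeries ℂ) ≠ 0 := by
      intro h0
      have := congrArg constantCoeff h0
      simp at this
    rw [← serLe_succ, Derivation.leibniz, hC] at ih
    simp only [smul_eq_mul] at ih
    apply mul_left_cancel₀ hne
    generalize C (1 / ((M+1 : ℕ) : ℂ)^κ) = c at *
    linear_combination ih - serLe κ (M+1) * h

open PowerSeries in
lemma newton_coeff (f a : ℕ → ℂ)
    (h : X * derivative ℂ (PowerSeries.mk f) = PowerSeries.mk a * PowerSeries.mk f) (d : ℕ) :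
    (d : ℂ) * f d = ∑ x ∈ Finset.HasAntidiagonal.antidiagonal d, a x.1 * f x.2 := by
  have := congrArg (coeff d) h
  rw [coeff_mul d (PowerSeries.mk a)] at this
  simp only [coeff_mk] at this
  rw [← this]
  rcases d with _ | d
  · simp
  · rw [coeff_succ_X_mul, coeff_derivative, coeff_mk]
    push_cast; ring

lemma sumLt_eq (d κ M : ℕ) : mzvSumLt d κ M = pSum (pws κ M) d :=
  eq_pSum _ (by simp [pws, pw]) (fun d => mzvSumLt d κ M) (sumLt_zero κ M)
    (newton_coeff _ _ (serLt_newton κ M)) d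

lemma sumLe_eq (d κ M : ℕ) : mzvSumLe d κ M = pSum (pw κ M) d :=
  eq_pSum _ (by simp [pw]) (fun d => mzvSumLe d κ M) (sumLe_zero κ M)
    (newton_coeff _ _ (serLe_newton κ M)) d

lemma tendsto_pSum (a : ℕ → ℕ → ℂ) (b : ℕ → ℂ)
    (h : ∀ r, 0 < r → Tendsto (fun M => a M r) atTop (𝓝 (b r))) (d : ℕ) :
    Tendsto (fun M => pSum (a M) d) atTop (𝓝 (pSum b d)) := by
  unfold pSum wt
  refine tendsto_finset_sum _ fun s hs => ?_
  exact (tendsto_multiset_prod s fun i hi => h i ((mem_partSet.1 hs).1 i hi)).div_const _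

/-- Limit of power sums. -/
def limv (k r : ℕ) : ℂ :=
  ((-1)^k * 2^(2*k) * (Real.pi : ℂ)^(2*k))^r *
    ((-1/2) * ((bernoulli' (2 * k * r) : ℂ) / ((2 * k * r).factorial : ℂ)))

lemma tendsto_pw (k r : ℕ) (hk : 1 ≤ k) (hr : 0 < r) :
    Tendsto (fun M => pw (2*k) M r) atTop (𝓝 (limv k r)) := by
  have hkr : k * r ≠ 0 := by positivity
  have h := hasSum_zeta_nat hkr
  rw [← hasSum_nat_add_iff' 1] at h
  have h2 := (Complex.hasSum_ofReal.2 h).tendsto_sum_nat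
  have e1 : (fun M => pw (2*k) M r) = fun M => ∑ i ∈ Finset.range M,
      (((1 / ((i+1 : ℕ) : ℝ)^(2*(k*r)) : ℝ)) : ℂ) := by
    funext M
    simp only [pw, hr.ne', if_false]
    refine Finset.sum_congr rfl fun i _ => ?_
    push_cast
    rw [div_pow, one_pow, ← pow_mul, mul_assoc]
  rw [e1]
  convert h2 using 2
  have hb : bernoulli' (2 * k * r) = bernoulli (2 * (k * r)) := by
    rw [mul_assoc, bernoulli_eq_bernoulli'_of_ne_one]
    omega
  rw [limv, hb]
  obtain ⟨n, hn⟩ : ∃ n, 2 * (k * r) = n + 1 := ⟨2*(k*r)-1, by omega⟩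
  have h3 : (2 : ℂ)^(2*(k*r)) = 2 * 2^(2*(k*r)-1) := by rw [hn]; simp [pow_succ, mul_comm]
  simp only [Finset.range_one, Finset.sum_singleton, Nat.cast_zero]
  rw [zero_pow (by omega : 2*(k*r) ≠ 0)]
  push_cast
  rw [mul_pow, mul_pow, ← pow_mul, ← pow_mul, ← pow_mul, mul_assoc 2 k r, h3]
  ring

lemma map_prod_scale (s : Multiset ℕ) (c e : ℂ) (g : ℕ → ℂ) :
    (s.map fun r => c ^ r * (e * g r)).prod = c ^ s.sum * (e ^ s.card * (s.map g).prod) := by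
  induction s using Multiset.induction_on with
  | empty => simp
  | cons a s ih => simp [ih, pow_add, pow_succ]; ring

lemma eval_false (k d : ℕ) : pSum (limv k) d =
    (-1 : ℂ) ^ (k * d) * 2 ^ (2 * k * d) * mzvEvalSum k d false *
          (Real.pi : ℂ) ^ (2 * k * d) := by
  rw [pSum_eq, mzvEvalSum, Finset.mul_sum, Finset.sum_mul]
  refine Finset.sum_congr rfl fun μ _ => ?_
  unfold limv
  rw [map_prod_scale, μ.parts_sum, mul_pow, mul_pow, ← pow_mul, ← pow_mul, ← pow_mul, div_pow]
  simp
  ring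

lemma eval_true (k d : ℕ) : pSum (fun r => -(-1)^r * limv k r) d =
    (-1 : ℂ) ^ (k * d) * 2 ^ (2 * k * d) * mzvEvalSum k d true *
          (Real.pi : ℂ) ^ (2 * k * d) := by
  rw [pSum_eq, mzvEvalSum, Finset.mul_sum, Finset.sum_mul]
  refine Finset.sum_congr rfl fun μ _ => ?_
  have e : (fun r => -(-1)^r * limv k r) = fun r => (-1 : ℂ)^r * ((-1) * limv k r) := by
    funext r; ring
  rw [e, map_prod_scale]
  unfold limv
  rw [map_prod_scale, μ.parts_sum, mul_pow, mul_pow, ← pow_mul, ← pow_mul, ← pow_mul, div_pow]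
  have h : (-1 : ℂ) ^ ((d : ℤ) - μ.parts.card) = (-1)^d * (-1)^μ.parts.card := by
    rw [zpow_sub₀ (by norm_num), zpow_natCast, zpow_natCast, div_eq_mul_inv, ← inv_pow]
    norm_num
  simp only [if_true, h]
  ring

lemma eval_rat (k d : ℕ) (b : Bool) : ∃ q : ℚ, mzvEvalSum k d b = (q : ℂ) := by
  refine ⟨∑ μ : Nat.Partition d,
    ((if b then (-1 : ℚ) ^ ((d : ℤ) - μ.parts.card) else 1) / (zPart μ : ℚ)) *
    ((-1 : ℚ) ^ μ.parts.card / 2 ^ μ.parts.card) *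
    (μ.parts.map fun pj =>
      (bernoulli' (2 * k * pj)) / ((2 * k * pj).factorial : ℚ)).prod, ?_⟩
  rw [mzvEvalSum, Rat.cast_sum]
  refine Finset.sum_congr rfl fun μ _ => ?_
  have : ∀ s : Multiset ℕ, (((s.map fun pj =>
      (bernoulli' (2 * k * pj)) / ((2 * k * pj).factorial : ℚ)).prod : ℚ) : ℂ) =
      (s.map fun pj =>
      (bernoulli' (2 * k * pj) : ℂ) / ((2 * k * pj).factorial : ℂ)).prod := by
    intro s
    induction s using Multiset.induction_on with
    | empty => simp
    | cons a s ih => simp [← ih]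
  rw [Rat.cast_mul, this]
  cases b <;> push_cast <;> simp

lemma eval_rat' (k d : ℕ) (b : Bool) :
    ∃ q : ℚ, (-1 : ℂ) ^ (k * d) * 2 ^ (2 * k * d) * mzvEvalSum k d b *
          (Real.pi : ℂ) ^ (2 * k * d) = (q : ℂ) * (Real.pi : ℂ) ^ (2 * k * d) := by
  obtain ⟨q, hq⟩ := eval_rat k d b
  refine ⟨(-1)^(k*d) * 2^(2*k*d) * q, ?_⟩
  rw [hq]; push_cast; ring

/-- **Formula (2.7)**: for integers `k ≥ 1`, `d ≥ 1` and `ω ∈ {•,★}`,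
`ζ^ω_d({2k}^d) = (-1)^{kd} 2^{2kd}
  [Σ_{μ ⊢ d} (ε^ω_μ/z_μ) ((-1)^{ℓ(μ)}/2^{ℓ(μ)}) ∏_j B_{2kμ_j}/(2kμ_j)!] π^{2kd}`,
and in particular this value is a rational multiple of `π^{2kd}`.
The multiple zeta value is expressed as the limit of its truncations. -/
theorem multiple_zeta_value_even
    (k d : ℕ) (hk : 1 ≤ k) (hd : 1 ≤ d) :
    (Tendsto (mzvSumLt d (2 * k)) atTop
        (𝓝 ((-1 : ℂ) ^ (k * d) * 2 ^ (2 * k * d) * mzvEvalSum k d true *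
          (Real.pi : ℂ) ^ (2 * k * d))) ∧
      ∃ q : ℚ, (-1 : ℂ) ^ (k * d) * 2 ^ (2 * k * d) * mzvEvalSum k d true *
          (Real.pi : ℂ) ^ (2 * k * d) = (q : ℂ) * (Real.pi : ℂ) ^ (2 * k * d)) ∧
    (Tendsto (mzvSumLe d (2 * k)) atTop
        (𝓝 ((-1 : ℂ) ^ (k * d) * 2 ^ (2 * k * d) * mzvEvalSum k d false *
          (Real.pi : ℂ) ^ (2 * k * d))) ∧
      ∃ q : ℚ, (-1 : ℂ) ^ (k * d) * 2 ^ (2 * k * d) * mzvEvalSum k d false *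
          (Real.pi : ℂ) ^ (2 * k * d) = (q : ℂ) * (Real.pi : ℂ) ^ (2 * k * d)) := by
  refine ⟨⟨?_, eval_rat' k d true⟩, ?_, eval_rat' k d false⟩
  · rw [← eval_true, show mzvSumLt d (2*k) = fun M => pSum (pws (2*k) M) d from
      funext fun M => sumLt_eq d (2*k) M]
    exact tendsto_pSum _ _ (fun r hr => (tendsto_pw k r hk hr).const_mul _) d
  · rw [← eval_false, show mzvSumLe d (2*k) = fun M => pSum (pw (2*k) M) d from
      funext fun M => sumLe_eq d (2*k) M]
    exact tendsto_pSum _ _ (fun r hr => tendsto_pw k r hk hr) d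

end
end

section
/- Let 0 < q < 1, let χ be a Dirichlet character, d ≥ 1, and let s be a complex number with Re(s) > 1. Then for each ω ∈ {•,★}, L^ω_{q,d}({s}^d; {χ}^d) = Σ_{μ ⊢ d} (ε^ω_μ / z_μ) · ∏_{j=1}^{ℓ(μ)} [ Σ_{l_j=0}^{μ_j − 1} C(μ_j − 1, l_j) (1 − q)^{l_j} L_q(μ_j s − l_j; χ^{μ_j}) ], where C(·,·) is the binomial coefficient and the outer sum is over all partitions μ of d. -/
open Complex Filter Finset Topology

noncomputable section

/-- The `q`-analogue Dirichlet `L`-function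
`L_q(s;χ) = ∑_{m≥1} χ(m) q^{m(s-1)}/[m]_q^s`, where `[m]_q = (1-q^m)/(1-q)` and
`q^{m(s-1)} = e^{m(s-1) log q}` (complex power of the positive real `q`). -/
def qLFun {N : ℕ} (χ : DirichletCharacter ℂ N) (q : ℝ) (s : ℂ) : ℂ :=
  ∑' m : ℕ, if m = 0 then 0 else
    χ m * (q : ℂ) ^ ((m : ℂ) * (s - 1)) / (((1 - q ^ m) / (1 - q) : ℝ) : ℂ) ^ s

/-- Truncated strict multiple `q`-`L`-sum
`∑_{0<m_1<⋯<m_d≤M} ∏_j χ(m_j) q^{m_j(s-1)}/[m_j]_q^s`. -/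
def qMultLSumLt {N : ℕ} (χ : DirichletCharacter ℂ N) (d : ℕ) (q : ℝ) (s : ℂ) (M : ℕ) : ℂ :=
  ∑ m ∈ (Fintype.piFinset fun _ : Fin d => Finset.Icc 1 M).filter
      (fun m => ∀ i j : Fin d, i < j → m i < m j),
    ∏ j, χ (m j) * (q : ℂ) ^ ((m j : ℂ) * (s - 1)) /
      (((1 - q ^ (m j)) / (1 - q) : ℝ) : ℂ) ^ s

/-- Truncated non-strict multiple `q`-`L`-sum
`∑_{0<m_1≤⋯≤m_d≤M} ∏_j χ(m_j) q^{m_j(s-1)}/[m_j]_q^s`. -/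
def qMultLSumLe {N : ℕ} (χ : DirichletCharacter ℂ N) (d : ℕ) (q : ℝ) (s : ℂ) (M : ℕ) : ℂ :=
  ∑ m ∈ (Fintype.piFinset fun _ : Fin d => Finset.Icc 1 M).filter
      (fun m => ∀ i j : Fin d, i < j → m i ≤ m j),
    ∏ j, χ (m j) * (q : ℂ) ^ ((m j : ℂ) * (s - 1)) /
      (((1 - q ^ (m j)) / (1 - q) : ℝ) : ℂ) ^ s

/-- The partition sum of formula (2.12). -/
def qEvalSum {N : ℕ} (χ : DirichletCharacter ℂ N) (d : ℕ) (q : ℝ) (s : ℂ)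
    (strict : Bool) : ℂ :=
  ∑ μ : Nat.Partition d,
    ((if strict then (-1 : ℂ) ^ ((d : ℤ) - μ.parts.card) else 1) / (zPart μ : ℂ)) *
    (μ.parts.map fun p =>
      ∑ l ∈ Finset.range p,
        ((p - 1).choose l : ℂ) * (1 - (q : ℂ)) ^ l * qLFun (χ ^ p) q (p * s - l)).prod

def zM (m : Multiset ℕ) : ℕ := ∏ i ∈ m.toFinset, i ^ m.count i * (m.count i).factorial

theorem zM_cons (i : ℕ) (m : Multiset ℕ) :
    zM (i ::ₘ m) = i * (m.count i + 1) * zM m := by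
  classical
  have key : ∀ (m' : Multiset ℕ) (S : Finset ℕ), m'.toFinset ⊆ S →
      zM m' = ∏ j ∈ S, j ^ m'.count j * (m'.count j).factorial := by
    intro m' S h
    unfold zM
    apply Finset.prod_subset h
    intro x _ hx
    have : m'.count x = 0 := by
      rw [Multiset.count_eq_zero]; simpa using hx
    simp [this]
  have hi : i ∈ (i ::ₘ m).toFinset := by simp
  rw [key (i ::ₘ m) _ (Finset.Subset.refl _), key m (i ::ₘ m).toFinset (by intro x; simp; tauto)]
  rw [← Finset.mul_prod_erase _ _ hi, ← Finset.mul_prod_erase _ _ hi]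
  have : ∏ x ∈ (i ::ₘ m).toFinset.erase i, x ^ (i ::ₘ m).count x * ((i ::ₘ m).count x).factorial
      = ∏ x ∈ (i ::ₘ m).toFinset.erase i, x ^ m.count x * (m.count x).factorial := by
    apply Finset.prod_congr rfl
    intro x hx
    rw [Multiset.count_cons_of_ne (Finset.ne_of_mem_erase hx)]
  rw [this, Multiset.count_cons_self, Nat.factorial_succ, pow_succ]
  ring

theorem zM_ne_zero (m : Multiset ℕ) (h : ∀ i ∈ m, 0 < i) : zM m ≠ 0 := by
  unfold zM
  rw [Finset.prod_ne_zero_iff]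
  intro i hi
  have := h i (by simpa using hi)
  positivity

def HP (p : ℕ → ℂ) (d : ℕ) : ℂ := ∑ μ : Nat.Partition d, (μ.parts.map p).prod / (zM μ.parts : ℂ)

theorem HP_zero (p : ℕ → ℂ) : HP p 0 = 1 := by
  unfold HP
  rw [Fintype.sum_unique]
  simp [zM, Nat.Partition.partition_zero_parts]

def consPart {d : ℕ} (k : Fin (d+1)) (ν : Nat.Partition (d - k)) : Nat.Partition (d+1) where
  parts := (k.1+1) ::ₘ ν.parts
  parts_pos := by
    intro i hi
    rcases Multiset.mem_cons.1 hi with h | h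
    · omega
    · exact ν.parts_pos h
  parts_sum := by
    rw [Multiset.sum_cons, ν.parts_sum]; have := k.2; omega

theorem HP_succ (p : ℕ → ℂ) (d : ℕ) :
    ((d : ℂ) + 1) * HP p (d+1) = ∑ k : Fin (d+1), p (k+1) * HP p (d - k) := by
  classical
  unfold HP
  have h1 : ∀ μ : Nat.Partition (d+1),
      ((d : ℂ) + 1) * ((μ.parts.map p).prod / (zM μ.parts : ℂ)) =
      ∑ i ∈ μ.parts.toFinset, p i * (((μ.parts.erase i).map p).prod / (zM (μ.parts.erase i) : ℂ)) := by
    intro μ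
    have hs : ((d : ℂ) + 1) = ∑ i ∈ μ.parts.toFinset, ((μ.parts.count i : ℂ) * i) := by
      have := μ.parts_sum
      rw [Finset.sum_multiset_count] at this
      simp only [smul_eq_mul] at this
      exact_mod_cast this.symm
    rw [hs, Finset.sum_mul]
    apply Finset.sum_congr rfl
    intro i hi
    have hi' : i ∈ μ.parts := by simpa using hi
    have hz := zM_cons i (μ.parts.erase i)
    rw [Multiset.cons_erase hi', Multiset.count_erase_self] at hz
    have hc : 1 ≤ μ.parts.count i := Multiset.one_le_count_iff_mem.2 hi'
    rw [Nat.sub_add_cancel hc] at hz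
    have hp : (μ.parts.map p).prod = p i * ((μ.parts.erase i).map p).prod := by
      conv_lhs => rw [← Multiset.cons_erase hi']
      simp
    have hz0 : zM (μ.parts.erase i) ≠ 0 := zM_ne_zero _ fun j hj =>
      μ.parts_pos (Multiset.mem_of_mem_erase hj)
    have hi0 : (i : ℂ) ≠ 0 := by exact_mod_cast (μ.parts_pos hi').ne'
    have hc0 : (μ.parts.count i : ℂ) ≠ 0 := by exact_mod_cast (by omega : μ.parts.count i ≠ 0)
    have hz0' : (zM (μ.parts.erase i) : ℂ) ≠ 0 := by exact_mod_cast hz0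
    rw [hp, hz]
    push_cast
    field_simp
  rw [Finset.mul_sum, Finset.sum_congr rfl (fun μ _ => h1 μ)]
  simp_rw [Finset.mul_sum]
  rw [Finset.sum_sigma', Finset.sum_sigma']
  symm
  refine Finset.sum_bij (fun x _ => (⟨consPart x.1 x.2, x.1.1+1⟩ : Σ _ : Nat.Partition (d+1), ℕ)) ?_ ?_ ?_ ?_
  · intro x _
    simp [consPart]
  · rintro ⟨k, ν⟩ _ ⟨k', ν'⟩ _ h
    simp only [Sigma.mk.injEq, heq_eq_eq] at h
    obtain ⟨h1, h2⟩ := h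
    have hk : k = k' := by ext; omega
    subst hk
    have := congrArg Nat.Partition.parts h1
    simp only [consPart, Multiset.cons_inj_right] at this
    have : ν = ν' := Nat.Partition.ext this
    subst this
    rfl
  · rintro ⟨μ, i⟩ h
    have hi : i ∈ μ.parts := by simpa using h
    have hpos := μ.parts_pos hi
    have hsum : i + (μ.parts.erase i).sum = d + 1 := by
      rw [← Multiset.sum_cons, Multiset.cons_erase hi, μ.parts_sum]
    refine ⟨⟨⟨i-1, by omega⟩, ⟨μ.parts.erase i, fun hj => μ.parts_pos (Multiset.mem_of_mem_erase hj), ?_⟩⟩, by simp, ?_⟩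
    · simp only; omega
    · have e : i - 1 + 1 = i := by omega
      simp only [consPart, e, Sigma.mk.injEq, heq_eq_eq, and_true]
      apply Nat.Partition.ext
      simp [Multiset.cons_erase hi]
  · intro x _
    simp [consPart]

open PowerSeries in
theorem HP_unique (p : ℕ → ℂ) (F : PowerSeries ℂ) (h0 : coeff 0 F = 1)
    (hF : derivative ℂ F = PowerSeries.mk (fun k => p (k+1)) * F) (d : ℕ) : coeff d F = HP p d := by
  induction d using Nat.strong_induction_on with
  | _ d ih =>
  rcases d with _ | d
  · rw [h0, HP_zero]
  · have h := congrArg (coeff d) hF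
    rw [coeff_derivative, coeff_mul, Finset.Nat.sum_antidiagonal_eq_sum_range_succ_mk,
      ← Fin.sum_univ_eq_sum_range (fun k => coeff k (PowerSeries.mk fun k => p (k+1)) * coeff (d - k) F)] at h
    have h2 := HP_succ p d
    have hd : (d : ℂ) + 1 ≠ 0 := by exact_mod_cast Nat.succ_ne_zero d
    apply mul_left_cancel₀ hd
    rw [h2, mul_comm, h]
    apply Finset.sum_congr rfl
    intro k _
    rw [coeff_mk, ih _ (by omega)]

/-- generic chain sum -/
def chainSum (r : ℕ → ℕ → Prop) [DecidableRel r] (f : ℕ → ℂ) (d M : ℕ) : ℂ :=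
  ∑ m ∈ (Fintype.piFinset fun _ : Fin d => Finset.Icc 1 M).filter
      (fun m => ∀ i j : Fin d, i < j → r (m i) (m j)), ∏ j, f (m j)

theorem chainSum_zero (r : ℕ → ℕ → Prop) [DecidableRel r] (f : ℕ → ℂ) (M : ℕ) :
    chainSum r f 0 M = 1 := by
  simp [chainSum]

theorem chainSum_succ_zero (r : ℕ → ℕ → Prop) [DecidableRel r] (f : ℕ → ℂ) (d : ℕ) :
    chainSum r f (d+1) 0 = 0 := by
  simp [chainSum]

theorem chainSum_succ (r : ℕ → ℕ → Prop) [DecidableRel r] (f : ℕ → ℂ) (d M M' : ℕ)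
    (hr : ∀ x y, r x y → x ≤ y) (hM : ∀ x, x ≤ M' ↔ r x (M+1)) (hM' : M' ≤ M + 1) :
    chainSum r f (d+1) (M+1) = chainSum r f (d+1) M + f (M+1) * chainSum r f d M' := by
  classical
  unfold chainSum
  rw [← Finset.sum_filter_add_sum_filter_not _ (fun m : Fin (d+1) → ℕ => m (Fin.last d) ≤ M)]
  congr 1
  · apply Finset.sum_congr _ (fun _ _ => rfl)
    ext m
    simp only [Finset.mem_filter, Fintype.mem_piFinset, Finset.mem_Icc]
    constructor
    · rintro ⟨⟨h1, h2⟩, h3⟩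
      refine ⟨fun i => ⟨(h1 i).1, ?_⟩, h2⟩
      rcases eq_or_ne i (Fin.last d) with rfl | hi
      · exact h3
      · exact (hr _ _ (h2 i _ (Fin.lt_last_iff_ne_last.2 hi))).trans h3
    · rintro ⟨h1, h2⟩
      exact ⟨⟨fun i => ⟨(h1 i).1, (h1 i).2.trans (Nat.le_succ _)⟩, h2⟩, (h1 _).2⟩
  · rw [Finset.mul_sum]
    symm
    refine Finset.sum_bij (fun m _ => (Fin.snoc m (M+1) : Fin (d+1) → ℕ)) ?_ ?_ ?_ ?_
    · intro m hm
      simp only [Finset.mem_filter, Fintype.mem_piFinset, Finset.mem_Icc] at hm ⊢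
      obtain ⟨h1, h2⟩ := hm
      refine ⟨⟨?_, ?_⟩, ?_⟩
      · intro i
        induction i using Fin.lastCases with
        | last => simp
        | cast i => simp only [Fin.snoc_castSucc]; exact ⟨(h1 i).1, (h1 i).2.trans hM'⟩
      · intro i j hij
        induction j using Fin.lastCases with
        | last =>
          induction i using Fin.lastCases with
          | last => exact absurd hij (lt_irrefl _)
          | cast i => simp only [Fin.snoc_castSucc, Fin.snoc_last]; exact (hM _).1 (h1 i).2
        | cast j =>
          induction i using Fin.lastCases with
          | last => exact absurd hij (not_lt.2 (Fin.le_last _))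
          | cast i => simp only [Fin.snoc_castSucc]; exact h2 i j (by simpa using hij)
      · simp
    · intro a _ b _ h
      have := congrArg Fin.init h
      simpa using this
    · intro m hm
      simp only [Finset.mem_filter, Fintype.mem_piFinset, Finset.mem_Icc] at hm
      obtain ⟨⟨h1, h2⟩, h3⟩ := hm
      have hl : m (Fin.last d) = M + 1 := by have := (h1 (Fin.last d)).2; omega
      refine ⟨Fin.init m, ?_, ?_⟩
      · simp only [Finset.mem_filter, Fintype.mem_piFinset, Finset.mem_Icc]
        refine ⟨fun i => ⟨(h1 _).1, ?_⟩, fun i j hij => h2 _ _ (by simpa using hij)⟩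
        rw [hM, ← hl]
        exact h2 _ _ (Fin.castSucc_lt_last i)
      · rw [← hl]; exact Fin.snoc_init_self m
    · intro m _
      rw [Fin.prod_univ_castSucc]
      simp [mul_comm]

section
open PowerSeries

theorem geom_aux (x : ℂ) : (PowerSeries.mk fun k => x ^ (k+1)) * (1 - C x * X) = C x := by
  ext n
  rcases n with _ | n
  · simp
  · rw [mul_sub, mul_one, ← mul_assoc, map_sub, coeff_succ_mul_X, mul_comm, coeff_C_mul]
    simp only [coeff_mk, coeff_C]
    simp; ring

theorem mk_psum_succ (g : ℕ → ℕ → ℂ) (M : ℕ) :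
    (PowerSeries.mk fun k => ∑ m ∈ Finset.Icc 1 (M+1), g m (k+1)) =
    (PowerSeries.mk fun k => ∑ m ∈ Finset.Icc 1 M, g m (k+1)) + PowerSeries.mk fun k => g (M+1) (k+1) := by
  ext n
  simp [Finset.sum_Icc_succ_top]

theorem chain_le (f : ℕ → ℂ) (d M : ℕ) :
    chainSum (· ≤ ·) f d M = HP (fun k => ∑ m ∈ Finset.Icc 1 M, f m ^ k) d := by
  have key : derivative ℂ (PowerSeries.mk fun d => chainSum (· ≤ ·) f d M) =
      (PowerSeries.mk fun k => ∑ m ∈ Finset.Icc 1 M, f m ^ (k+1)) *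
        (PowerSeries.mk fun d => chainSum (· ≤ ·) f d M) := by
    induction M with
    | zero =>
      ext n
      rw [coeff_derivative]
      have : (PowerSeries.mk fun k => ∑ m ∈ Finset.Icc 1 0, f m ^ (k+1)) = 0 := by ext; simp
      rw [this]
      simp [chainSum_succ_zero]
    | succ M ih =>
      rw [mk_psum_succ (fun m k => f m ^ k)]
      set x := f (M+1) with hx
      have hrec : (PowerSeries.mk fun d => chainSum (· ≤ ·) f d (M+1)) * (1 - C x * X) =
          PowerSeries.mk fun d => chainSum (· ≤ ·) f d M := by
        ext n
        rcases n with _ | n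
        · simp [chainSum_zero]
        · rw [mul_sub, mul_one, ← mul_assoc, map_sub, coeff_succ_mul_X, mul_comm, coeff_C_mul]
          simp only [coeff_mk]
          rw [chainSum_succ (· ≤ ·) f n M (M+1) (fun _ _ h => h) (fun _ => Iff.rfl) le_rfl]
          ring
      set F := (PowerSeries.mk fun d => chainSum (· ≤ ·) f d (M+1))
      set F0 := (PowerSeries.mk fun d => chainSum (· ≤ ·) f d M)
      set P := (PowerSeries.mk fun k => ∑ m ∈ Finset.Icc 1 M, f m ^ (k+1))
      have hg := geom_aux x
      set G := (PowerSeries.mk fun k => x ^ (k+1))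
      have hne : (1 - C x * X : PowerSeries ℂ) ≠ 0 := by
        intro h
        have := congrArg (coeff 0) h
        simp at this
      have hd := congrArg (derivative ℂ) hrec
      rw [Derivation.leibniz, ih, ← hrec] at hd
      have hdl : derivative ℂ (1 - C x * X : PowerSeries ℂ) = - C x := by
        simp
      rw [hdl] at hd
      simp only [smul_eq_mul] at hd
      apply mul_right_cancel₀ hne
      linear_combination hd - F * hg
  have h := HP_unique (fun k => ∑ m ∈ Finset.Icc 1 M, f m ^ k) _ (by simp [chainSum_zero]) key d
  simpa using h

theorem chain_lt (f : ℕ → ℂ) (d M : ℕ) :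
    chainSum (· < ·) f d M = HP (fun k => ∑ m ∈ Finset.Icc 1 M, -(-f m) ^ k) d := by
  have key : derivative ℂ (PowerSeries.mk fun d => chainSum (· < ·) f d M) =
      (PowerSeries.mk fun k => ∑ m ∈ Finset.Icc 1 M, -(-f m) ^ (k+1)) *
        (PowerSeries.mk fun d => chainSum (· < ·) f d M) := by
    induction M with
    | zero =>
      ext n
      rw [coeff_derivative]
      have : (PowerSeries.mk fun k => ∑ m ∈ Finset.Icc 1 0, -(-f m) ^ (k+1)) = 0 := by ext; simp
      rw [this]
      simp [chainSum_succ_zero]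
    | succ M ih =>
      rw [mk_psum_succ (fun m k => -(-f m) ^ k)]
      set x := f (M+1) with hx
      have hrec : (PowerSeries.mk fun d => chainSum (· < ·) f d (M+1)) =
          (PowerSeries.mk fun d => chainSum (· < ·) f d M) * (1 - C (-x) * X) := by
        ext n
        rcases n with _ | n
        · simp [chainSum_zero]
        · rw [mul_sub, mul_one, ← mul_assoc, map_sub, coeff_succ_mul_X, mul_comm, coeff_C_mul]
          simp only [coeff_mk]
          rw [chainSum_succ (· < ·) f n M M (fun _ _ h => h.le) (fun _ => Nat.lt_succ_iff.symm) (Nat.le_succ _)]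
          ring
      set F := (PowerSeries.mk fun d => chainSum (· < ·) f d (M+1))
      set F0 := (PowerSeries.mk fun d => chainSum (· < ·) f d M)
      set P := (PowerSeries.mk fun k => ∑ m ∈ Finset.Icc 1 M, -(-f m) ^ (k+1))
      have hg := geom_aux (-x)
      have hG : (PowerSeries.mk fun k => -(-x) ^ (k+1)) = - PowerSeries.mk fun k => (-x) ^ (k+1) := by
        ext; simp
      rw [hG]
      set G := (PowerSeries.mk fun k => (-x) ^ (k+1))
      have hdl : derivative ℂ (1 - C (-x) * X : PowerSeries ℂ) = - C (-x) := by
        simp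
      rw [hrec, Derivation.leibniz, ih, hdl]
      simp only [smul_eq_mul]
      linear_combination F0 * hg
  have h := HP_unique (fun k => ∑ m ∈ Finset.Icc 1 M, -(-f m) ^ k) _ (by simp [chainSum_zero]) key d
  simpa using h

end

theorem HP_tendsto (p : ℕ → ℕ → ℂ) (P : ℕ → ℂ) (d : ℕ)
    (h : ∀ k, 0 < k → Tendsto (fun M => p M k) atTop (𝓝 (P k))) :
    Tendsto (fun M => HP (p M) d) atTop (𝓝 (HP P d)) := by
  unfold HP
  apply tendsto_finsetSum
  intro μ _
  apply Tendsto.div_const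
  apply tendsto_multiset_prod
  intro i hi
  exact h i (μ.parts_pos hi)

def qTerm {N : ℕ} (χ : DirichletCharacter ℂ N) (q : ℝ) (s : ℂ) (m : ℕ) : ℂ :=
  χ m * (q : ℂ) ^ ((m : ℂ) * (s - 1)) / (((1 - q ^ m) / (1 - q) : ℝ) : ℂ) ^ s

theorem one_le_qnum (q : ℝ) (hq0 : 0 < q) (hq1 : q < 1) (m : ℕ) (hm : m ≠ 0) :
    1 ≤ (1 - q ^ m) / (1 - q) := by
  rw [le_div_iff₀ (by linarith)]
  have : q ^ m ≤ q := pow_le_of_le_one hq0.le hq1.le hm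
  linarith

theorem qTerm_summable {N : ℕ} (χ : DirichletCharacter ℂ N) (q : ℝ) (hq0 : 0 < q) (hq1 : q < 1)
    (s : ℂ) (hs : 1 < s.re) :
    Summable (fun m : ℕ => if m = 0 then 0 else qTerm χ q s m) := by
  have hr1 : q ^ (s.re - 1) < 1 := Real.rpow_lt_one hq0.le hq1 (by linarith)
  refine Summable.of_norm_bounded (g := fun m : ℕ => (q ^ (s.re - 1)) ^ m)
    (summable_geometric_of_lt_one (Real.rpow_nonneg hq0.le _) hr1) ?_
  intro m
  split_ifs with hm
  · simp; positivity
  · have h1 := one_le_qnum q hq0 hq1 m hm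
    unfold qTerm
    rw [norm_div, norm_mul, Complex.norm_cpow_eq_rpow_re_of_pos hq0,
      Complex.norm_cpow_eq_rpow_re_of_pos (by linarith)]
    have e : q ^ ((m : ℂ) * (s - 1)).re = (q ^ (s.re - 1)) ^ m := by
      rw [← Real.rpow_natCast, ← Real.rpow_mul hq0.le]
      congr 1
      simp [mul_comm]
    rw [e]
    have h2 : 1 ≤ ((1 - q ^ m) / (1 - q)) ^ s.re := Real.one_le_rpow h1 (by linarith)
    rw [div_le_iff₀ (by linarith)]
    have h3 := DirichletCharacter.norm_le_one χ (m : ZMod N)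
    have h4 : 0 ≤ (q ^ (s.re - 1)) ^ m := by positivity
    calc ‖χ m‖ * (q ^ (s.re - 1)) ^ m ≤ 1 * (q ^ (s.re - 1)) ^ m := by gcongr
      _ = (q ^ (s.re - 1)) ^ m * 1 := by ring
      _ ≤ _ := by gcongr

theorem qTerm_pow {N : ℕ} (χ : DirichletCharacter ℂ N) (q : ℝ) (hq0 : 0 < q) (hq1 : q < 1)
    (s : ℂ) (m : ℕ) (hm : m ≠ 0) (p : ℕ) (hp : 0 < p) :
    ∑ l ∈ Finset.range p, ((p - 1).choose l : ℂ) * (1 - (q : ℂ)) ^ l * qTerm (χ ^ p) q (p * s - l) m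
      = qTerm χ q s m ^ p := by
  obtain ⟨n, rfl⟩ : ∃ n, p = n + 1 := ⟨p - 1, by omega⟩
  have h1 := one_le_qnum q hq0 hq1 m hm
  have hqc : (q : ℂ) ≠ 0 := by exact_mod_cast hq0.ne'
  have hQ : (q : ℂ) ^ m ≠ 0 := pow_ne_zero _ hqc
  have h1q : (1 - (q : ℂ)) ≠ 0 := by
    have : (1 - q) ≠ 0 := by linarith
    exact_mod_cast this
  unfold qTerm
  set b : ℂ := (((1 - q ^ m) / (1 - q) : ℝ) : ℂ) with hb
  have hb0 : b ≠ 0 := by rw [hb]; exact_mod_cast (by linarith : (1 - q ^ m) / (1 - q) ≠ 0)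
  have hbq : (1 - (q : ℂ)) * b = 1 - (q : ℂ) ^ m := by
    rw [hb]; push_cast; field_simp
  set A : ℂ := (q : ℂ) ^ ((m : ℂ) * (((n+1 : ℕ) : ℂ) * s - 1)) with hA
  set B : ℂ := b ^ (((n+1 : ℕ) : ℂ) * s) with hB
  have hB0 : B ≠ 0 := by rw [hB, Complex.cpow_ne_zero_iff]; exact Or.inl hb0
  have eA : ∀ l : ℕ, (q : ℂ) ^ ((m : ℂ) * (((n+1 : ℕ) : ℂ) * s - l - 1)) = A * (((q : ℂ) ^ m)⁻¹) ^ l := by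
    intro l
    have : (m : ℂ) * (((n+1 : ℕ) : ℂ) * s - l - 1) = (m : ℂ) * (((n+1 : ℕ) : ℂ) * s - 1) - ((m * l : ℕ) : ℂ) := by
      push_cast; ring
    rw [this, Complex.cpow_sub _ _ hqc, Complex.cpow_natCast, pow_mul, inv_pow, div_eq_mul_inv]
  have eB : ∀ l : ℕ, b ^ (((n+1 : ℕ) : ℂ) * s - l) = B / b ^ l := by
    intro l
    rw [Complex.cpow_sub _ _ hb0, Complex.cpow_natCast]
  have eP : ((q : ℂ) ^ ((m : ℂ) * (s - 1))) ^ (n+1) = A * (((q : ℂ) ^ m)⁻¹) ^ n := by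
    rw [← eA n, ← Complex.cpow_nat_mul]
    congr 1; push_cast; ring
  have eS : (b ^ s) ^ (n+1) = B := by
    rw [hB, ← Complex.cpow_nat_mul]
  have eχ : (χ ^ (n+1)) (m : ZMod N) = χ m ^ (n+1) := MulChar.pow_apply' χ (Nat.succ_ne_zero n) _
  rw [div_pow, mul_pow, eP, eS, eχ]
  have : ((q : ℂ) ^ m)⁻¹ = (1 - (q : ℂ)) * b * ((q : ℂ) ^ m)⁻¹ + 1 := by
    rw [hbq]; field_simp; ring
  conv_rhs => rw [this, add_pow]
  rw [Finset.mul_sum, Finset.mul_sum, Finset.sum_div]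
  apply Finset.sum_congr rfl
  intro l _
  rw [eA, eB]
  simp only [Nat.add_sub_cancel, one_pow, mul_pow]
  rw [div_div_eq_mul_div]
  ring

theorem qSum_tendsto {N : ℕ} (χ : DirichletCharacter ℂ N) (q : ℝ) (hq0 : 0 < q) (hq1 : q < 1)
    (s : ℂ) (hs : 1 < s.re) (p : ℕ) (hp : 0 < p) :
    Tendsto (fun M => ∑ m ∈ Finset.Icc 1 M, qTerm χ q s m ^ p) atTop
      (𝓝 (∑ l ∈ Finset.range p,
        ((p - 1).choose l : ℂ) * (1 - (q : ℂ)) ^ l * qLFun (χ ^ p) q (p * s - l))) := by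
  have h1 : HasSum (fun m : ℕ => ∑ l ∈ Finset.range p, ((p - 1).choose l : ℂ) * (1 - (q : ℂ)) ^ l *
      (if m = 0 then 0 else qTerm (χ ^ p) q (p * s - l) m)) (∑ l ∈ Finset.range p,
        ((p - 1).choose l : ℂ) * (1 - (q : ℂ)) ^ l * qLFun (χ ^ p) q (p * s - l)) := by
    apply hasSum_sum
    intro l hl
    apply HasSum.mul_left
    apply (qTerm_summable (χ ^ p) q hq0 hq1 (p * s - l) ?_).hasSum
    have hl' : (l : ℝ) + 1 ≤ p := by exact_mod_cast Finset.mem_range.1 hl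
    have hp' : (0 : ℝ) < p := by exact_mod_cast hp
    simp
    nlinarith
  have h2 := (h1.tendsto_sum_nat).comp (tendsto_add_atTop_nat 1)
  refine h2.congr ?_
  intro M
  simp only [Function.comp]
  rw [Finset.sum_range_succ']
  simp only [if_true, mul_zero, Finset.sum_const_zero, add_zero, Nat.succ_ne_zero, if_false]
  rw [Finset.range_eq_Ico, Finset.sum_Ico_add' (fun m => ∑ l ∈ Finset.range p, ((p - 1).choose l : ℂ) * (1 - (q : ℂ)) ^ l *
      qTerm (χ ^ p) q (p * s - l) m) 0 M 1]
  apply Finset.sum_congr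
  · ext; simp
  · intro m hm
    exact qTerm_pow χ q hq0 hq1 s m (by simp at hm; omega) p hp

theorem sign_aux (m : Multiset ℕ) (P : ℕ → ℂ) :
    (m.map fun k => -((-1) ^ k * P k)).prod = (-1 : ℂ) ^ ((m.sum : ℤ) - m.card) * (m.map P).prod := by
  induction m using Multiset.induction_on with
  | empty => simp
  | cons a m ih =>
    simp only [Multiset.map_cons, Multiset.prod_cons, Multiset.sum_cons, Multiset.card_cons, ih]
    have : (((a + m.sum : ℕ) : ℤ) - ((m.card + 1 : ℕ) : ℤ)) = (a : ℤ) + ((m.sum : ℤ) - m.card) - 1 := by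
      push_cast; ring
    have hne : (-1 : ℂ) ≠ 0 := by norm_num
    rw [this, zpow_sub₀ hne ((a : ℤ) + ((m.sum : ℤ) - m.card)) 1, zpow_add₀ hne, zpow_natCast]
    simp
    ring

/-- **Proposition 2.8**: for `0 < q < 1`, a Dirichlet character `χ`, `d ≥ 1` and
`Re(s) > 1`,
`L^ω_{q,d}({s}^d;{χ}^d) = Σ_{μ ⊢ d} (ε^ω_μ/z_μ)
  ∏_{j=1}^{ℓ(μ)} Σ_{l_j=0}^{μ_j-1} C(μ_j-1, l_j) (1-q)^{l_j} L_q(μ_j s - l_j; χ^{μ_j})`,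
the multiple `q`-`L`-value being expressed as the limit of its truncations. -/
theorem multiple_q_L_value_eval
    (N : ℕ) [NeZero N] (χ : DirichletCharacter ℂ N) (d : ℕ) (hd : 1 ≤ d)
    (q : ℝ) (hq0 : 0 < q) (hq1 : q < 1) (s : ℂ) (hs : 1 < s.re) :
    Tendsto (qMultLSumLt χ d q s) atTop (𝓝 (qEvalSum χ d q s true)) ∧
    Tendsto (qMultLSumLe χ d q s) atTop (𝓝 (qEvalSum χ d q s false)) := by
  set P : ℕ → ℂ := fun p => ∑ l ∈ Finset.range p,
        ((p - 1).choose l : ℂ) * (1 - (q : ℂ)) ^ l * qLFun (χ ^ p) q (p * s - l) with hP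
  have hlim : ∀ k, 0 < k → Tendsto (fun M => ∑ m ∈ Finset.Icc 1 M, qTerm χ q s m ^ k) atTop
      (𝓝 (P k)) := fun k hk => qSum_tendsto χ q hq0 hq1 s hs k hk
  constructor
  · have e1 : qEvalSum χ d q s true = HP (fun k => -((-1) ^ k * P k)) d := by
      unfold qEvalSum HP
      apply Finset.sum_congr rfl
      intro μ _
      rw [sign_aux, μ.parts_sum]
      simp only [if_true]
      rw [div_mul_eq_mul_div]
      rfl
    have e2 : qMultLSumLt χ d q s = fun M => HP (fun k => ∑ m ∈ Finset.Icc 1 M, -(-qTerm χ q s m) ^ k) d := by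
      funext M
      rw [← chain_lt]
      rfl
    rw [e1, e2]
    apply HP_tendsto (fun M k => ∑ m ∈ Finset.Icc 1 M, -(-qTerm χ q s m) ^ k)
    intro k hk
    refine (((hlim k hk).const_mul ((-1) ^ k)).neg).congr ?_
    intro M
    rw [Finset.mul_sum, ← Finset.sum_neg_distrib]
    apply Finset.sum_congr rfl
    intro m _
    rw [neg_pow (qTerm χ q s m)]
  · have e1 : qEvalSum χ d q s false = HP P d := by
      unfold qEvalSum HP
      apply Finset.sum_congr rfl
      intro μ _
      rw [div_mul_eq_mul_div]
      simp only [Bool.false_eq_true, if_false, one_mul]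
      rfl
    have e2 : qMultLSumLe χ d q s = fun M => HP (fun k => ∑ m ∈ Finset.Icc 1 M, qTerm χ q s m ^ k) d := by
      funext M
      rw [← chain_le]
      rfl
    rw [e1, e2]
    exact HP_tendsto (fun M k => ∑ m ∈ Finset.Icc 1 M, qTerm χ q s m ^ k) P d hlim

end
end

section
/- Let χ be a Dirichlet character, d ≥ 1, and s an integer ≥ 1, with χ non-principal if s = 1. Then L^•_d({s}^d;{χ}^d) = Σ_{μ ⊢ d} ε_μ u_μ ∏_{j=1}^{ℓ(μ)} L^★_{μ_j}({s}^{μ_j};{χ}^{μ_j}) and, symmetrically, L^★_d({s}^d;{χ}^d) = Σ_{μ ⊢ d} ε_μ u_μ ∏_{j=1}^{ℓ(μ)} L^•_{μ_j}({s}^{μ_j};{χ}^{μ_j}), where u_μ := ℓ(μ)! / ∏_i m_i(μ)!. The same two identities hold with L^•, L^★ replaced throughout by the q-analogues L^•_q, L^★_q for any 0 < q < 1 and complex s with Re(s) > 1. -/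
open Complex Filter Finset Topology

noncomputable section

/-- `u_μ = ℓ(μ)!/∏_i m_i(μ)!`, the multinomial coefficient of the multiplicities. -/
def uPart {d : ℕ} (μ : Nat.Partition d) : ℕ :=
  Nat.multinomial μ.parts.toFinset fun i => μ.parts.count i

/-- Truncated strict multiple `L`-sum `∑_{0<m_1<⋯<m_d≤M} ∏_j χ(m_j)/m_j^s`. -/
def multLSumLt {N : ℕ} (χ : DirichletCharacter ℂ N) (d s M : ℕ) : ℂ :=
  ∑ m ∈ (Fintype.piFinset fun _ : Fin d => Finset.Icc 1 M).filter
      (fun m => ∀ i j : Fin d, i < j → m i < m j),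
    ∏ j, χ (m j) / (m j : ℂ) ^ s

/-- Truncated non-strict multiple `L`-sum `∑_{0<m_1≤⋯≤m_d≤M} ∏_j χ(m_j)/m_j^s`. -/
def multLSumLe {N : ℕ} (χ : DirichletCharacter ℂ N) (d s M : ℕ) : ℂ :=
  ∑ m ∈ (Fintype.piFinset fun _ : Fin d => Finset.Icc 1 M).filter
      (fun m => ∀ i j : Fin d, i < j → m i ≤ m j),
    ∏ j, χ (m j) / (m j : ℂ) ^ s

/-- The right-hand side `Σ_{μ ⊢ d} ε_μ u_μ ∏_{j=1}^{ℓ(μ)} V(μ_j)` of formula (2.13),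
where `V c` is the depth-`c` multiple `L`-value (of the opposite kind). -/
def mixRHS (d : ℕ) (V : ℕ → ℂ) : ℂ :=
  ∑ μ : Nat.Partition d,
    (-1 : ℂ) ^ ((d : ℤ) - μ.parts.card) * (uPart μ : ℂ) * (μ.parts.map V).prod

/-- generic strict sum -/
def eS (f : ℕ → ℂ) (d M : ℕ) : ℂ :=
  ∑ m ∈ (Fintype.piFinset fun _ : Fin d => Finset.Icc 1 M).filter
      (fun m => ∀ i j : Fin d, i < j → m i < m j), ∏ j, f (m j)

/-- generic non-strict sum -/
def hS (f : ℕ → ℂ) (d M : ℕ) : ℂ :=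
  ∑ m ∈ (Fintype.piFinset fun _ : Fin d => Finset.Icc 1 M).filter
      (fun m => ∀ i j : Fin d, i < j → m i ≤ m j), ∏ j, f (m j)

lemma eS_zero (f : ℕ → ℂ) (M : ℕ) : eS f 0 M = 1 := by
  simp [eS]

lemma hS_zero (f : ℕ → ℂ) (M : ℕ) : hS f 0 M = 1 := by
  simp [hS]

lemma eS_succ (f : ℕ → ℂ) (d M : ℕ) :
    eS f (d + 1) M = ∑ k ∈ Finset.Icc 1 M, f k * eS f d (k - 1) := by
  simp only [eS, Finset.mul_sum]
  rw [Finset.sum_sigma']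
  refine Finset.sum_bij' (fun m _ => ⟨m (Fin.last d), Fin.init m⟩)
    (fun x _ => Fin.snoc (α := fun _ => ℕ) x.2 x.1) ?_ ?_ ?_ ?_ ?_
  · intro m hm
    simp only [Finset.mem_filter, Fintype.mem_piFinset, Finset.mem_Icc, Finset.mem_sigma] at hm ⊢
    refine ⟨hm.1 _, fun j => ⟨(hm.1 _).1, ?_⟩, fun i j hij => hm.2 _ _ (by simpa using hij)⟩
    have := hm.2 j.castSucc (Fin.last d) (Fin.castSucc_lt_last j)
    simp only [Fin.init]
    omega
  · rintro ⟨k, m⟩ hm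
    simp only [Finset.mem_filter, Fintype.mem_piFinset, Finset.mem_Icc, Finset.mem_sigma] at hm ⊢
    obtain ⟨h1, h2, h3⟩ := hm
    refine ⟨fun j => ?_, fun i j hij => ?_⟩
    · induction j using Fin.lastCases with
      | last => simpa using h1
      | cast j => have := h2 j; simp only [Fin.snoc_castSucc]; omega
    · induction j using Fin.lastCases with
      | last =>
        induction i using Fin.lastCases with
        | last => simp at hij
        | cast i => have := h2 i; simp only [Fin.snoc_castSucc, Fin.snoc_last]; omega
      | cast j =>
        induction i using Fin.lastCases with
        | last => exact absurd hij (by simp [(Fin.castSucc_lt_last j).le])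
        | cast i => simpa using h3 i j (by simpa using hij)
  · intro m hm; simp
  · rintro ⟨k, m⟩ hm; simp
  · intro m hm
    rw [Fin.prod_univ_castSucc, mul_comm]
    rfl

lemma hS_succ (f : ℕ → ℂ) (d M : ℕ) :
    hS f (d + 1) M = ∑ k ∈ Finset.Icc 1 M, f k * hS f d k := by
  simp only [hS, Finset.mul_sum]
  rw [Finset.sum_sigma']
  refine Finset.sum_bij' (fun m _ => ⟨m (Fin.last d), Fin.init m⟩)
    (fun x _ => Fin.snoc (α := fun _ => ℕ) x.2 x.1) ?_ ?_ ?_ ?_ ?_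
  · intro m hm
    simp only [Finset.mem_filter, Fintype.mem_piFinset, Finset.mem_Icc, Finset.mem_sigma] at hm ⊢
    refine ⟨hm.1 _, fun j => ⟨(hm.1 _).1, ?_⟩, fun i j hij => hm.2 _ _ (by simpa using hij)⟩
    exact hm.2 j.castSucc (Fin.last d) (Fin.castSucc_lt_last j)
  · rintro ⟨k, m⟩ hm
    simp only [Finset.mem_filter, Fintype.mem_piFinset, Finset.mem_Icc, Finset.mem_sigma] at hm ⊢
    obtain ⟨h1, h2, h3⟩ := hm
    refine ⟨fun j => ?_, fun i j hij => ?_⟩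
    · induction j using Fin.lastCases with
      | last => simpa using h1
      | cast j => have := h2 j; simp only [Fin.snoc_castSucc]; omega
    · induction j using Fin.lastCases with
      | last =>
        induction i using Fin.lastCases with
        | last => simp at hij
        | cast i => have := h2 i; simp only [Fin.snoc_castSucc, Fin.snoc_last]; omega
      | cast j =>
        induction i using Fin.lastCases with
        | last => exact absurd hij (by simp [(Fin.castSucc_lt_last j).le])
        | cast i => simpa using h3 i j (by simpa using hij)
  · intro m hm; simp
  · rintro ⟨k, m⟩ hm; simp
  · intro m hm
    rw [Fin.prod_univ_castSucc, mul_comm]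
    rfl

/-- generating series of the strict sums -/
def eP (f : ℕ → ℂ) (M : ℕ) : PowerSeries ℂ := PowerSeries.mk fun d => eS f d M

/-- generating series of the strict sums, alternating signs -/
def aP (f : ℕ → ℂ) (M : ℕ) : PowerSeries ℂ := PowerSeries.mk fun d => (-1) ^ d * eS f d M

/-- generating series of the non-strict sums -/
def hP (f : ℕ → ℂ) (M : ℕ) : PowerSeries ℂ := PowerSeries.mk fun d => hS f d M

/-- generating series of the power sums -/
def pP (f : ℕ → ℂ) (M : ℕ) : PowerSeries ℂ :=
  PowerSeries.mk fun k => (-1) ^ k * ∑ m ∈ Finset.Icc 1 M, f m ^ (k + 1)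

lemma eS_step (f : ℕ → ℂ) (d M : ℕ) :
    eS f (d + 1) (M + 1) = eS f (d + 1) M + f (M + 1) * eS f d M := by
  rw [eS_succ, eS_succ, Finset.sum_Icc_succ_top (by omega)]
  simp

lemma hS_step (f : ℕ → ℂ) (d M : ℕ) :
    hS f (d + 1) (M + 1) = hS f (d + 1) M + f (M + 1) * hS f d (M + 1) := by
  rw [hS_succ, hS_succ, Finset.sum_Icc_succ_top (by omega)]

lemma eP_step (f : ℕ → ℂ) (M : ℕ) :
    eP f (M + 1) = (1 + PowerSeries.C (f (M + 1)) * PowerSeries.X) * eP f M := by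
  ext n
  rw [add_mul, one_mul, mul_assoc, map_add, PowerSeries.coeff_C_mul]
  cases n with
  | zero => simp [eP, eS_zero]
  | succ n => simp [eP, eS_step, PowerSeries.coeff_succ_X_mul]

lemma aP_step (f : ℕ → ℂ) (M : ℕ) :
    aP f (M + 1) = (1 - PowerSeries.C (f (M + 1)) * PowerSeries.X) * aP f M := by
  ext n
  rw [sub_mul, one_mul, mul_assoc, map_sub, PowerSeries.coeff_C_mul]
  cases n with
  | zero => simp [aP, eS_zero]
  | succ n => simp [aP, eS_step, PowerSeries.coeff_succ_X_mul]; ring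

lemma hP_step (f : ℕ → ℂ) (M : ℕ) :
    (1 - PowerSeries.C (f (M + 1)) * PowerSeries.X) * hP f (M + 1) = hP f M := by
  ext n
  rw [sub_mul, one_mul, mul_assoc, map_sub, PowerSeries.coeff_C_mul]
  cases n with
  | zero => simp [hP, hS_zero]
  | succ n => simp [hP, hS_step, PowerSeries.coeff_succ_X_mul]

lemma eP_zero (f : ℕ → ℂ) : eP f 0 = 1 := by
  ext n
  cases n with
  | zero => simp [eP, eS_zero]
  | succ n => simp [eP, eS_succ, PowerSeries.coeff_one]

lemma aP_zero (f : ℕ → ℂ) : aP f 0 = 1 := by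
  ext n
  cases n with
  | zero => simp [aP, eS_zero]
  | succ n => simp [aP, eS_succ, PowerSeries.coeff_one]

lemma hP_zero (f : ℕ → ℂ) : hP f 0 = 1 := by
  ext n
  cases n with
  | zero => simp [hP, hS_zero]
  | succ n => simp [hP, hS_succ, PowerSeries.coeff_one]

lemma aP_mul_hP (f : ℕ → ℂ) (M : ℕ) : aP f M * hP f M = 1 := by
  induction M with
  | zero => simp [aP_zero, hP_zero]
  | succ M ih => rw [aP_step, mul_right_comm, hP_step, mul_comm, ih]

lemma pP_step (f : ℕ → ℂ) (M : ℕ) :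
    (1 + PowerSeries.C (f (M + 1)) * PowerSeries.X) * (pP f (M + 1) - pP f M)
      = PowerSeries.C (f (M + 1)) := by
  ext n
  rw [add_mul, one_mul, mul_assoc, map_add, PowerSeries.coeff_C_mul]
  cases n with
  | zero => simp [pP, Finset.sum_Icc_succ_top]
  | succ n =>
    simp [pP, Finset.sum_Icc_succ_top, PowerSeries.coeff_succ_X_mul, PowerSeries.coeff_C]
    ring

lemma newton (f : ℕ → ℂ) (M : ℕ) :
    PowerSeries.derivative ℂ (eP f M) = pP f M * eP f M := by
  induction M with
  | zero =>
    have : pP f 0 = 0 := by ext n; simp [pP]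
    rw [this, eP_zero]; simp
  | succ M ih =>
    have h := pP_step f M
    rw [eP_step, Derivation.leibniz, ih]
    simp only [map_add, Derivation.leibniz, smul_eq_mul, PowerSeries.derivative_C,
      PowerSeries.derivative_X, Derivation.map_one_eq_zero]
    linear_combination (-eP f M) * h

lemma newton_coeff_s8 (f : ℕ → ℂ) (n M : ℕ) :
    eS f (n + 1) M = (∑ p ∈ Finset.HasAntidiagonal.antidiagonal n,
      ((-1) ^ p.1 * ∑ m ∈ Finset.Icc 1 M, f m ^ (p.1 + 1)) * eS f p.2 M) / (n + 1) := by
  have h := congrArg (PowerSeries.coeff n) (newton f M)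
  rw [PowerSeries.coeff_derivative, PowerSeries.coeff_mul] at h
  simp only [eP, pP, PowerSeries.coeff_mk] at h
  rw [← h]
  field_simp

lemma eS_tendsto (f : ℕ → ℂ)
    (hf : ∀ k, 1 ≤ k → ∃ l, Tendsto (fun M => ∑ m ∈ Finset.Icc 1 M, f m ^ k) atTop (𝓝 l))
    (c : ℕ) : ∃ l, Tendsto (eS f c) atTop (𝓝 l) := by
  choose! p hp using hf
  induction c using Nat.strong_induction_on with
  | _ c ih =>
    cases c with
    | zero => exact ⟨1, by simpa [funext (eS_zero f)] using tendsto_const_nhds⟩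
    | succ n =>
      choose! e he using ih
      refine ⟨(∑ p' ∈ Finset.HasAntidiagonal.antidiagonal n,
        ((-1) ^ p'.1 * p (p'.1 + 1)) * e p'.2) / (n + 1), ?_⟩
      rw [funext (newton_coeff_s8 f n)]
      refine Tendsto.div_const (tendsto_finsetSum _ fun i hi => ?_) _
      exact ((hp _ (by omega)).const_mul _).mul
        (he _ (by have := Finset.HasAntidiagonal.mem_antidiagonal.1 hi; omega))

/-- The algebraic identity. -/
lemma mix_identity (d : ℕ) (a b : ℕ → ℂ) (hb0 : b 0 = 1)
    (hab : PowerSeries.mk a * PowerSeries.mk (fun k => (-1) ^ k * b k) = 1) :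
    a d = mixRHS d b := by
  set c : ℕ → ℂ := fun k => -((-1) ^ k * b k) with hc
  set P : PowerSeries ℂ := ∑ k ∈ Finset.Icc 1 d, PowerSeries.monomial k (c k) with hP
  have hPc : ∀ j, PowerSeries.coeff j P = if 1 ≤ j ∧ j ≤ d then c j else 0 := by
    intro j
    simp [hP, PowerSeries.coeff_monomial]
  have hXP : PowerSeries.X ∣ P := by
    rw [PowerSeries.X_dvd_iff, ← PowerSeries.coeff_zero_eq_constantCoeff_apply, hPc]
    simp
  have h1 : PowerSeries.X ^ (d + 1) ∣ PowerSeries.mk a * (1 - P) - 1 := by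
    have h0 : PowerSeries.mk a * (1 - P) - 1
        = PowerSeries.mk a * ((1 - P) - PowerSeries.mk (fun k => (-1) ^ k * b k)) := by
      rw [mul_sub _ (1 - P), hab]
    rw [h0]
    refine Dvd.dvd.mul_left ?_ _
    rw [PowerSeries.X_pow_dvd_iff]
    intro m hm
    rw [map_sub, map_sub, hPc, PowerSeries.coeff_one, PowerSeries.coeff_mk]
    rcases Nat.eq_zero_or_pos m with rfl | h
    · simp [hb0]
    · rw [if_neg (by omega), if_pos (by omega)]; simp [hc]
  have h2 : PowerSeries.X ^ (d + 1) ∣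
      PowerSeries.mk a - ∑ n ∈ Finset.range (d + 1), P ^ n := by
    obtain ⟨u, hu⟩ := h1
    obtain ⟨v, hv⟩ := pow_dvd_pow_of_dvd hXP (d + 1)
    have hg := geom_sum_mul_neg P (d + 1)
    refine ⟨PowerSeries.mk a * v + u * ∑ n ∈ Finset.range (d + 1), P ^ n, ?_⟩
    linear_combination (PowerSeries.mk a) * hv + (∑ n ∈ Finset.range (d + 1), P ^ n) * hu
      - (PowerSeries.mk a) * hg
  have h3 := (PowerSeries.X_pow_dvd_iff.1 h2) d (by omega)
  rw [map_sub, PowerSeries.coeff_mk, sub_eq_zero] at h3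
  rw [h3, map_sum, mixRHS]
  have h4 : ∀ n, PowerSeries.coeff d (P ^ n) = ∑ k ∈ (Finset.Icc 1 d).sym n,
      if k.val.sum = d then (k.val.countPerms : ℂ) * (k.val.map c).prod else 0 := by
    intro n
    rw [hP, Finset.sum_pow, map_sum]
    refine Finset.sum_congr rfl fun k _ => ?_
    have : ∀ t : Multiset ℕ, (t.map fun k => PowerSeries.monomial k (c k)).prod
        = PowerSeries.monomial t.sum (t.map c).prod := by
      intro t
      induction t using Multiset.induction_on with
      | empty => simp
      | cons x t ih => simp [ih, PowerSeries.monomial_mul_monomial]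
    rw [this, ← nsmul_eq_mul, map_nsmul, PowerSeries.coeff_monomial]
    by_cases hk : k.val.sum = d
    · rw [if_pos hk, if_pos hk.symm, nsmul_eq_mul]
    · rw [if_neg hk, if_neg (Ne.symm hk), smul_zero]
  rw [Finset.sum_congr rfl fun n _ => h4 n, Finset.sum_sigma', ← Finset.sum_filter]
  symm
  refine Finset.sum_bij (fun μ _ => ⟨μ.parts.card, ⟨μ.parts, rfl⟩⟩) ?_ ?_ ?_ ?_
  · intro μ _
    simp only [Finset.mem_filter, Finset.mem_sigma, Finset.mem_range]
    refine ⟨⟨?_, Finset.mem_sym_iff.2 fun i hi => ?_⟩, μ.parts_sum⟩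
    · have : μ.parts.card • 1 ≤ μ.parts.sum :=
        Multiset.card_nsmul_le_sum fun x hx => μ.parts_pos hx
      rw [μ.parts_sum] at this
      simp at this; omega
    · have hi' : i ∈ μ.parts := hi
      exact Finset.mem_Icc.2 ⟨μ.parts_pos hi', by
        have := Multiset.le_sum_of_mem hi'
        rwa [μ.parts_sum] at this⟩
  · intro μ _ ν _ h
    ext1
    exact congrArg (fun x : (n : ℕ) × Sym ℕ n => x.2.val) h
  · rintro ⟨n, ⟨k, hk⟩⟩ h
    simp only [Finset.mem_filter, Finset.mem_sigma, Finset.mem_range] at h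
    subst hk
    exact ⟨⟨k, fun {i} hi => (Finset.mem_Icc.1 (Finset.mem_sym_iff.1 h.1.2 i hi)).1, h.2⟩, Finset.mem_univ _, rfl⟩
  · intro μ _
    have hu : uPart μ = μ.parts.countPerms := by
      rw [uPart, Multiset.countPerms, Finsupp.multinomial_eq]
      congr 1
    have hs : ∀ t : Multiset ℕ, (t.map c).prod
        = (-1) ^ ((t.sum : ℤ) - t.card) * (t.map b).prod := by
      intro t
      induction t using Multiset.induction_on with
      | empty => simp
      | cons x t ih =>
        have : (((x ::ₘ t).sum : ℕ) : ℤ) - ((x ::ₘ t).card : ℕ) = (x : ℤ) - 1 + (t.sum - t.card) := by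
          simp; ring
        rw [this, zpow_add₀ (by norm_num), zpow_sub₀ (by norm_num)]
        rw [Multiset.map_cons, Multiset.prod_cons, ih, Multiset.map_cons, Multiset.prod_cons]
        simp only [hc, zpow_natCast, zpow_one]
        ring
    have := hs μ.parts
    rw [μ.parts_sum] at this
    show _ = (μ.parts.countPerms : ℂ) * (μ.parts.map c).prod
    rw [this, hu]
    ring

lemma eS_eq_mix (f : ℕ → ℂ) (d M : ℕ) : eS f d M = mixRHS d (fun c => hS f c M) := by
  refine mix_identity d (fun c => eS f c M) _ (hS_zero f M) ?_
  have h := congrArg (PowerSeries.rescale (-1 : ℂ)) (aP_mul_hP f M)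
  rw [map_mul, map_one] at h
  rw [← h]
  congr 1
  · ext n; simp [aP, PowerSeries.coeff_rescale, ← mul_assoc, ← mul_pow]
  · ext n; simp [hP, PowerSeries.coeff_rescale]

lemma hS_eq_mix (f : ℕ → ℂ) (d M : ℕ) : hS f d M = mixRHS d (fun c => eS f c M) := by
  refine mix_identity d (fun c => hS f c M) _ (eS_zero f M) ?_
  have h := aP_mul_hP f M
  rw [mul_comm] at h
  exact h

lemma mix_tendsto (d : ℕ) (g : ℕ → ℕ → ℂ) (V : ℕ → ℂ)
    (h : ∀ c, Tendsto (g c) atTop (𝓝 (V c))) :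
    Tendsto (fun M => mixRHS d (fun c => g c M)) atTop (𝓝 (mixRHS d V)) := by
  unfold mixRHS
  refine tendsto_finsetSum _ fun μ _ => Tendsto.const_mul _ ?_
  exact tendsto_multiset_prod _ fun i _ => h i

lemma main_generic (f : ℕ → ℂ)
    (hf : ∀ k, 1 ≤ k → ∃ l, Tendsto (fun M => ∑ m ∈ Finset.Icc 1 M, f m ^ k) atTop (𝓝 l))
    (d : ℕ) :
    (∃ V : ℕ → ℂ,
        (∀ c, 1 ≤ c → c ≤ d → Tendsto (hS f c) atTop (𝓝 (V c))) ∧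
        Tendsto (eS f d) atTop (𝓝 (mixRHS d V))) ∧
      (∃ V : ℕ → ℂ,
        (∀ c, 1 ≤ c → c ≤ d → Tendsto (eS f c) atTop (𝓝 (V c))) ∧
        Tendsto (hS f d) atTop (𝓝 (mixRHS d V))) := by
  choose e he using eS_tendsto f hf
  have hh : ∀ c, Tendsto (hS f c) atTop (𝓝 (mixRHS c e)) := by
    intro c
    rw [funext (hS_eq_mix f c)]
    exact mix_tendsto c (eS f) e he
  refine ⟨⟨fun c => mixRHS c e, fun c _ _ => hh c, ?_⟩, ⟨e, fun c _ _ => he c, hh d⟩⟩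
  rw [funext (eS_eq_mix f d)]
  exact mix_tendsto d (hS f) _ hh

lemma tendsto_of_summable_norm (g : ℕ → ℂ) (hg : Summable fun n => ‖g (n + 1)‖) :
    ∃ l, Tendsto (fun M : ℕ => ∑ m ∈ Finset.Icc 1 M, g m) atTop (𝓝 l) := by
  refine ⟨∑' n, g (n + 1), ?_⟩
  convert hg.of_norm.hasSum.tendsto_sum_nat using 2 with M
  rw [Finset.range_eq_Ico, Finset.sum_Ico_add' g 0 M 1]
  rfl

lemma char_sum_bounded {N : ℕ} [NeZero N] (χ : DirichletCharacter ℂ N) (hχ : χ ≠ 1) (n : ℕ) :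
    ‖∑ i ∈ Finset.range n, χ ((i + 1 : ℕ) : ZMod N)‖ ≤ N := by
  have hN : 0 < N := Nat.pos_of_ne_zero (NeZero.ne N)
  have hper : ∀ a : ℕ, ∑ i ∈ Finset.range N, χ ((a + i + 1 : ℕ) : ZMod N) = 0 := by
    intro a
    rw [← MulChar.sum_eq_zero_of_ne_one hχ]
    rw [← Equiv.sum_comp (Equiv.addLeft ((a + 1 : ℕ) : ZMod N)) (fun x => χ x)]
    refine Finset.sum_bij' (fun i _ => (i : ZMod N)) (fun x _ => x.val) ?_ ?_ ?_ ?_ ?_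
    · simp
    · intro x _; exact Finset.mem_range.2 (ZMod.val_lt x)
    · intro i hi; exact ZMod.val_cast_of_lt (Finset.mem_range.1 hi)
    · intro x _; simp
    · intro i _
      congr 1
      push_cast [Equiv.coe_addLeft]
      ring
  induction n using Nat.strong_induction_on with
  | _ n ih =>
    rcases lt_or_ge n N with h | h
    · calc _ ≤ ∑ i ∈ Finset.range n, ‖χ ((i + 1 : ℕ) : ZMod N)‖ := norm_sum_le _ _
        _ ≤ ∑ i ∈ Finset.range n, 1 := Finset.sum_le_sum fun i _ => χ.norm_le_one _
        _ ≤ N := by simpa using h.le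
    · obtain ⟨m, rfl⟩ := Nat.exists_eq_add_of_le' h
      rw [Finset.sum_range_add, hper, add_zero]
      exact ih m (by omega)

lemma conv_nonq {N : ℕ} [NeZero N] (χ : DirichletCharacter ℂ N) (s : ℕ) (hs : 1 ≤ s)
    (hχ : s = 1 → χ ≠ 1) (k : ℕ) (hk : 1 ≤ k) :
    ∃ l, Tendsto (fun M : ℕ => ∑ m ∈ Finset.Icc 1 M, (χ (m : ZMod N) / (m : ℂ) ^ s) ^ k)
      atTop (𝓝 l) := by
  by_cases h : s * k = 1
  · obtain ⟨rfl, rfl⟩ : s = 1 ∧ k = 1 := ⟨Nat.eq_one_of_mul_eq_one_right h, Nat.eq_one_of_mul_eq_one_left h⟩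
    have hanti : Antitone fun n : ℕ => 1 / ((n : ℝ) + 1) := by
      intro a b hab
      have : (a : ℝ) ≤ b := by exact_mod_cast hab
      exact one_div_le_one_div_of_le (by positivity) (by linarith)
    have := hanti.cauchySeq_series_mul_of_tendsto_zero_of_bounded
      tendsto_one_div_add_atTop_nhds_zero_nat (char_sum_bounded χ (hχ rfl))
    obtain ⟨l, hl⟩ := cauchySeq_tendsto_of_complete this
    refine ⟨l, ?_⟩
    convert hl using 2 with M
    rw [Finset.range_eq_Ico, show Finset.Icc 1 M = Finset.Ico (0 + 1) (M + 1) from rfl,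
      ← Finset.sum_Ico_add' (fun m : ℕ => (χ (m : ZMod N) / (m : ℂ) ^ 1) ^ 1) 0 M 1]
    refine Finset.sum_congr rfl fun i _ => ?_
    simp [div_eq_inv_mul]
  · have h2 : 1 < s * k := by
      have : 1 ≤ s * k := Nat.mul_pos hs hk
      omega
    apply tendsto_of_summable_norm
    have hsum := (summable_nat_add_iff 1).2 (Real.summable_one_div_nat_pow.2 h2)
    refine Summable.of_nonneg_of_le (fun _ => norm_nonneg _) (fun n => ?_) hsum
    rw [norm_pow, norm_div, norm_pow, div_pow, ← pow_mul, Complex.norm_natCast]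
    gcongr
    exact pow_le_one₀ (norm_nonneg _) (χ.norm_le_one _)

lemma conv_q {N : ℕ} (χ : DirichletCharacter ℂ N) (q : ℝ) (hq : 0 < q) (hq1 : q < 1)
    (z : ℂ) (hz : 1 < z.re) (k : ℕ) (hk : 1 ≤ k) :
    ∃ l, Tendsto (fun M : ℕ => ∑ m ∈ Finset.Icc 1 M,
      (χ (m : ZMod N) * (q : ℂ) ^ ((m : ℂ) * (z - 1)) /
        (((1 - q ^ m) / (1 - q) : ℝ) : ℂ) ^ z) ^ k) atTop (𝓝 l) := by
  apply tendsto_of_summable_norm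
  set r : ℝ := q ^ (z.re - 1) with hr
  have hr0 : 0 < r := Real.rpow_pos_of_pos hq _
  have hr1 : r < 1 := Real.rpow_lt_one hq.le hq1 (by linarith)
  have hsum := (summable_nat_add_iff 1).2 (summable_geometric_of_lt_one hr0.le hr1)
  refine Summable.of_nonneg_of_le (fun _ => norm_nonneg _) (fun n => ?_) hsum
  have hb : ∀ m : ℕ, 1 ≤ m → ‖χ (m : ZMod N) * (q : ℂ) ^ ((m : ℂ) * (z - 1)) /
        (((1 - q ^ m) / (1 - q) : ℝ) : ℂ) ^ z‖ ≤ r ^ m := by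
    intro m hm
    have h1 : 1 ≤ (1 - q ^ m) / (1 - q) := by
      rw [le_div_iff₀ (by linarith)]
      have : q ^ m ≤ q ^ 1 := pow_le_pow_of_le_one hq.le hq1.le hm
      simp at this; linarith
    rw [norm_div, norm_mul, Complex.norm_cpow_eq_rpow_re_of_pos hq,
      Complex.norm_cpow_eq_rpow_re_of_pos (by linarith)]
    have h2 : ((m : ℂ) * (z - 1)).re = (z.re - 1) * m := by simp [mul_comm]
    rw [h2, Real.rpow_mul hq.le, Real.rpow_natCast, ← hr]
    have h3 : 1 ≤ ((1 - q ^ m) / (1 - q)) ^ z.re := Real.one_le_rpow h1 (by linarith)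
    have h4 := χ.norm_le_one (m : ZMod N)
    calc _ ≤ 1 * r ^ m / 1 := by gcongr
      _ = r ^ m := by simp
  rw [norm_pow]
  refine (pow_le_of_le_one (norm_nonneg _) ?_ (by omega)).trans (hb _ (by omega))
  exact (hb _ (by omega)).trans (pow_le_one₀ hr0.le hr1.le)

/-- **Formula (2.13)**: for `(P,Q)` any of `(L^•,L^★)`, `(L^★,L^•)`,
`(L^•_q,L^★_q)`, `(L^★_q,L^•_q)`, one has
`P_d({s}^d;{χ}^d) = Σ_{μ ⊢ d} ε_μ u_μ ∏_{j=1}^{ℓ(μ)} Q_{μ_j}({s}^{μ_j};{χ}^{μ_j})`.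
Each multiple `L`-value is expressed as the limit of its truncations, the `Q`-values of
all depths `1 ≤ c ≤ d` being packaged as a function `V` of the depth. -/
theorem multiple_L_value_bullet_star_relation
    (N : ℕ) [NeZero N] (χ : DirichletCharacter ℂ N) (d : ℕ) (hd : 1 ≤ d)
    (s : ℕ) (hs : 1 ≤ s) (hχ : s = 1 → χ ≠ 1) :
    ((∃ V : ℕ → ℂ,
        (∀ c, 1 ≤ c → c ≤ d → Tendsto (multLSumLe χ c s) atTop (𝓝 (V c))) ∧
        Tendsto (multLSumLt χ d s) atTop (𝓝 (mixRHS d V))) ∧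
      (∃ V : ℕ → ℂ,
        (∀ c, 1 ≤ c → c ≤ d → Tendsto (multLSumLt χ c s) atTop (𝓝 (V c))) ∧
        Tendsto (multLSumLe χ d s) atTop (𝓝 (mixRHS d V)))) ∧
    (∀ q : ℝ, 0 < q → q < 1 → ∀ z : ℂ, 1 < z.re →
      (∃ V : ℕ → ℂ,
        (∀ c, 1 ≤ c → c ≤ d → Tendsto (qMultLSumLe χ c q z) atTop (𝓝 (V c))) ∧
        Tendsto (qMultLSumLt χ d q z) atTop (𝓝 (mixRHS d V))) ∧
      (∃ V : ℕ → ℂ,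
        (∀ c, 1 ≤ c → c ≤ d → Tendsto (qMultLSumLt χ c q z) atTop (𝓝 (V c))) ∧
        Tendsto (qMultLSumLe χ d q z) atTop (𝓝 (mixRHS d V)))) := by
  refine ⟨?_, fun q hq hq1 z hz => ?_⟩
  · exact main_generic (fun m => χ (m : ZMod N) / (m : ℂ) ^ s) (conv_nonq χ s hs hχ) d
  · exact main_generic (fun m => χ (m : ZMod N) * (q : ℂ) ^ ((m : ℂ) * (z - 1)) /
        (((1 - q ^ m) / (1 - q) : ℝ) : ℂ) ^ z) (conv_q χ q hq hq1 z hz) d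

end
end
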